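/- arXiv:2307.02517 — 3 statements merged into one kernel-verified Lean document; each statement's English description precedes it below -/
import Mathlib

section
/- There exists an absolute constant C > 0 such that for every finite connected graph G with at least two vertices the following holds: writing η = η(G), δ = diam(G), and capt for the capture time of the one-cop Robber Locating Game on G^{1/η}, one has ζ(G) ≤ C · 2^{capt/η} · 16^η · δ^{2η}. -/
open SimpleGraph

/-- The vertex type of the `m`-subdivision of a simple graph `G`:
branch vertices (`Sum.inl`) together with, for each edge (oriented from its
smaller to its larger endpoint) and each `i : Fin (m-1)`, the internal vertex
of the corresponding thread at distance `i+1` from the smaller endpoint. -/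
abbrev SubVert (V : Type*) [LinearOrder V] (G : SimpleGraph V) (m : ℕ) : Type _ :=
  V ⊕ ({e : V × V // G.Adj e.1 e.2 ∧ e.1 < e.2} × Fin (m - 1))

/-- Basic adjacency generating relation for the `m`-subdivision. -/
def subPre {V : Type*} [LinearOrder V] (G : SimpleGraph V) (m : ℕ) :
    SubVert V G m → SubVert V G m → Prop
  | Sum.inl u, Sum.inl v => m = 1 ∧ G.Adj u v
  | Sum.inl u, Sum.inr ei => (u = ei.1.1.1 ∧ (ei.2 : ℕ) = 0) ∨ (u = ei.1.1.2 ∧ (ei.2 : ℕ) + 2 = m)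
  | Sum.inr ei, Sum.inr ej => ei.1 = ej.1 ∧ (ei.2 : ℕ) + 1 = (ej.2 : ℕ)
  | Sum.inr _, Sum.inl _ => False

/-- The `m`-subdivision `G^{1/m}` of `G`: every edge of `G` is replaced by a
path (thread) of length `m`. -/
def Subdiv {V : Type*} [LinearOrder V] (G : SimpleGraph V) (m : ℕ) :
    SimpleGraph (SubVert V G m) :=
  SimpleGraph.fromRel (subPre G m)

/-- The vertex of `G^{1/m}` lying on the thread replacing the edge `{w₁, w₂}`
at distance `x` along the thread from `w₁` (for `0 ≤ x ≤ m`). -/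
def threadVert {V : Type*} [LinearOrder V] (G : SimpleGraph V) (m : ℕ) (w₁ w₂ : V)
    (h : G.Adj w₁ w₂) (x : ℕ) : SubVert V G m :=
  if hx0 : x = 0 then Sum.inl w₁
  else if hxm : m ≤ x then Sum.inl w₂
  else if hlt : w₁ < w₂ then
    Sum.inr (⟨(w₁, w₂), h, hlt⟩, ⟨x - 1, by omega⟩)
  else
    Sum.inr (⟨(w₂, w₁), h.symm, lt_of_le_of_ne (not_lt.mp hlt) h.ne'⟩, ⟨m - x - 1, by omega⟩)

/-- A vertex of `G^{1/m}` lies on the thread replacing the edge `{w₁, w₂}`. -/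
def OnThread {V : Type*} [LinearOrder V] (G : SimpleGraph V) (m : ℕ) (w₁ w₂ : V)
    (h : G.Adj w₁ w₂) (v : SubVert V G m) : Prop :=
  ∃ x ≤ m, v = threadVert G m w₁ w₂ h x
/-- A robber trajectory: at each time step the robber stays put or moves
to an adjacent vertex. -/
def ValidTraj {V : Type*} (G : SimpleGraph V) (r : ℕ → V) : Prop :=
  ∀ t, r (t + 1) = r t ∨ G.Adj (r t) (r (t + 1))

/-- A deterministic cop strategy for `k` cops: a function from the list of
probe results of all previous rounds (each round's results being the `k`
probed distances) to the `k` vertices probed in the current round. -/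
abbrev CopStrategy (V : Type*) (k : ℕ) := List (Fin k → ℕ) → (Fin k → V)

/-- The history of probe results after `t` rounds, when strategy `A` plays
against the robber trajectory `r`. -/
noncomputable def probeHist {V : Type*} (G : SimpleGraph V) {k : ℕ} (A : CopStrategy V k)
    (r : ℕ → V) : ℕ → List (Fin k → ℕ)
  | 0 => []
  | t + 1 => probeHist G A r t ++ [fun i => G.dist (A (probeHist G A r t) i) (r t)]

/-- The set of robber positions consistent with all probe results received
through round `t` (inclusive), when `A` plays against trajectory `r`. -/
def RSet {V : Type*} (G : SimpleGraph V) {k : ℕ} (A : CopStrategy V k)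
    (r : ℕ → V) (t : ℕ) : Set V :=
  {w | ∃ r', ValidTraj G r' ∧ probeHist G A r' (t + 1) = probeHist G A r (t + 1) ∧ r' t = w}

/-- A cop strategy is winning if against every robber trajectory, after
finitely many rounds the consistent set becomes a singleton. -/
def CopWinning {V : Type*} (G : SimpleGraph V) {k : ℕ} (A : CopStrategy V k) : Prop :=
  ∀ r : ℕ → V, ValidTraj G r → ∃ t, RSet G A r t = {r t}

/-- `G` is localizable with `k` cops. -/
def Localizable {V : Type*} (G : SimpleGraph V) (k : ℕ) : Prop :=
  ∃ A : CopStrategy V k, CopWinning G A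

/-- The localization number `ζ(G)`. -/
noncomputable def locNum {V : Type*} (G : SimpleGraph V) : ℕ :=
  sInf {k | Localizable G k}

/-- The subdivision number `η(G)`: the least `m ≥ 1` such that `G^{1/m}` is
localizable with one cop. -/
noncomputable def subdivNum {V : Type*} [LinearOrder V] (G : SimpleGraph V) : ℕ :=
  sInf {m | 1 ≤ m ∧ Localizable (Subdiv G m) 1}

/-- The capture time: the least `T` such that some strategy with `k` cops is
guaranteed to locate the robber within `T` rounds. -/
noncomputable def captTime {V : Type*} (G : SimpleGraph V) (k : ℕ) : ℕ :=
  sInf {T | ∃ A : CopStrategy V k, ∀ r : ℕ → V, ValidTraj G r → ∃ t < T, RSet G A r t = {r t}}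

/-- The node set of the cop strategy graph `H_A` of a strategy `A`: all game
states (identified with the information available to the cops, i.e. the
history of probe results) reachable under `A` along some robber trajectory
without passing beyond a terminating state. -/
def StrategyStates {V : Type*} (G : SimpleGraph V) {k : ℕ} (A : CopStrategy V k) :
    Set (List (Fin k → ℕ)) :=
  {h | ∃ r t, ValidTraj G r ∧ h = probeHist G A r t ∧
    ∀ s, s + 1 < t → RSet G A r s ≠ {r s}}

/-!
A robber on `G` is simulated by a robber on the `m`-subdivision, `m = η`, who spends `m` rounds on
each move (`liftTraj`). An optimal one-cop strategy `A` on the subdivision is then transferred to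
`G`: at time `T` the cops probe the endpoints of all threads containing a probe or a guess that `A`
might make within `m` rounds of the lifted robber's visit to the branch vertex of time `T`.

If none of these probes hits the robber, then for every later consistent trajectory the distances
from the endpoints to it at time `T` are known. Up to the binary choice between moving and staying
put in each round, they determine the answers that `A` receives, since off its own thread a probe of
`A` sees the robber through an endpoint. So each of the `2 ^ (T + 1)` move patterns leaves a single
history at the beginning of the window of `T`. In each of the at most `2 * m` rounds of that window
a probe has at most `4 * δ` possible answers: two ways to leave the probed thread, times `2 * δ`
distances from an endpoint to a position at known offset on a thread. A history offers at most four
endpoints, and the sum over the rounds is geometric, so `16 * 2 ^ T * (16 * δ ^ 2) ^ m` probes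
suffice. When `A` locates the lifted robber, at some time `T ≤ capt / m`, its guess lies on a thread
at the current vertex of the robber on `G`, which is therefore probed.

That `η` is positive and attained follows by sweeping the branch vertices twice with one cop: for
large `m` the robber either visits a branch vertex or stays on one thread during the second sweep.
-/

section Trajectories

variable {X : Type*} {H : SimpleGraph X} {r : ℕ → X}

theorem le_add_dist_of_adj_le (hH : H.Connected) {f : X → ℕ}
    (hf : ∀ p q, H.Adj p q → f q ≤ f p + 1) (p q : X) : f q ≤ f p + H.dist p q := by
  obtain ⟨w, hw⟩ := hH.exists_walk_length_eq_dist p q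
  rw [← hw]
  clear hw
  induction w with
  | nil => exact Nat.le_add_right _ _
  | cons h w ih =>
    have := hf _ _ h
    rw [Walk.length_cons]
    lia

theorem mul_dist_le_mul_dist_add (hH : H.Connected) {u v : X} (h : H.Adj u v) (z : X) (m : ℕ) :
    m * H.dist z v ≤ m * H.dist z u + m := by
  have hle : H.dist z v ≤ H.dist z u + 1 :=
    hH.dist_triangle.trans (Nat.add_le_add_left (dist_eq_one_iff_adj.2 h).le _)
  exact (Nat.mul_le_mul_left m hle).trans_eq (Nat.mul_succ m _)

theorem ValidTraj.edist_le (hr : ValidTraj H r) (s d : ℕ) : H.edist (r s) (r (s + d)) ≤ d := by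
  induction d with
  | zero => simp
  | succ d ih =>
    have hstep : H.edist (r (s + d)) (r (s + d + 1)) ≤ 1 :=
      edist_le_one_iff_adj_or_eq.2 ((hr (s + d)).symm.imp_right Eq.symm)
    calc H.edist (r s) (r (s + (d + 1)))
        ≤ H.edist (r s) (r (s + d)) + H.edist (r (s + d)) (r (s + d + 1)) :=
          SimpleGraph.edist_triangle
      _ ≤ (d + 1 : ℕ) := by push_cast; exact add_le_add ih hstep

theorem ValidTraj.edist_le_of_le (hr : ValidTraj H r) {s t d : ℕ} (hs : s ≤ t + d)
    (ht : t ≤ s + d) : H.edist (r s) (r t) ≤ d := by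
  obtain h | h := Nat.le_total s t
  · obtain ⟨c, rfl⟩ := Nat.exists_eq_add_of_le h
    exact (hr.edist_le s c).trans (by exact_mod_cast Nat.le_of_add_le_add_left ht)
  · obtain ⟨c, rfl⟩ := Nat.exists_eq_add_of_le h
    rw [SimpleGraph.edist_comm]
    exact (hr.edist_le t c).trans (by exact_mod_cast Nat.le_of_add_le_add_left hs)

theorem ValidTraj.dist_le_add (hH : H.Connected) (hr : ValidTraj H r) (z : X) {s t d : ℕ}
    (hs : s ≤ t + d) (ht : t ≤ s + d) : H.dist z (r t) ≤ H.dist z (r s) + d :=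
  hH.dist_triangle.trans
    (Nat.add_le_add_left (ENat.toNat_le_of_le_natCast (hr.edist_le_of_le hs ht)) _)

end Trajectories

section Histories

variable {X : Type*} {H : SimpleGraph X} {k : ℕ} {A : CopStrategy X k} {r r' : ℕ → X} {s t : ℕ}

theorem length_probeHist (r : ℕ → X) (t : ℕ) : (probeHist H A r t).length = t := by
  induction t with
  | zero => rfl
  | succ t ih => rw [probeHist, List.length_append, ih, List.length_singleton]

theorem probeHist_congr (h : ∀ s < t, r' s = r s) : probeHist H A r' t = probeHist H A r t := by
  induction t with
  | zero => rfl
  | succ t ih => rw [probeHist, probeHist, ih fun s hs => h s (by lia), h t (by lia)]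

theorem probeHist_succ_eq_iff :
    probeHist H A r' (t + 1) = probeHist H A r (t + 1) ↔
      probeHist H A r' t = probeHist H A r t ∧
        ∀ i, H.dist (A (probeHist H A r t) i) (r' t) = H.dist (A (probeHist H A r t) i) (r t) := by
  rw [probeHist, probeHist]
  constructor
  · intro h
    obtain ⟨hinit, hlast⟩ := List.append_inj' h rfl
    rw [hinit] at hlast
    exact ⟨hinit, congrFun (List.singleton_inj.1 hlast)⟩
  · rintro ⟨hinit, hlast⟩
    rw [hinit, funext hlast]

variable (H A r t) in
/-- The robber trajectories which the cops cannot tell apart from `r` during the first `t` rounds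
of strategy `A`. -/
def consistentTraj : Set (ℕ → X) :=
  {r' | ValidTraj H r' ∧ probeHist H A r' t = probeHist H A r t}

theorem self_mem_consistentTraj (hr : ValidTraj H r) : r ∈ consistentTraj H A r t :=
  ⟨hr, rfl⟩

theorem mem_consistentTraj_succ :
    r' ∈ consistentTraj H A r (t + 1) ↔
      r' ∈ consistentTraj H A r t ∧
        ∀ i, H.dist (A (probeHist H A r t) i) (r' t) = H.dist (A (probeHist H A r t) i) (r t) :=
  (and_congr_right' probeHist_succ_eq_iff).trans and_assoc.symm

theorem consistentTraj_antitone : Antitone (consistentTraj H A r) :=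
  antitone_nat_of_succ_le fun _ _ h => (mem_consistentTraj_succ.1 h).1

theorem dist_eq_of_mem_consistentTraj (h : r' ∈ consistentTraj H A r t) (hst : s < t) (i : Fin k) :
    H.dist (A (probeHist H A r s) i) (r' s) = H.dist (A (probeHist H A r s) i) (r s) :=
  (mem_consistentTraj_succ.1 (consistentTraj_antitone hst h)).2 i

theorem RSet_eq_singleton_iff (hr : ValidTraj H r) :
    RSet H A r t = {r t} ↔ ∀ r' ∈ consistentTraj H A r (t + 1), r' t = r t := by
  rw [Set.eq_singleton_iff_unique_mem]
  exact ⟨fun h r' hr' => h.2 _ ⟨r', hr'.1, hr'.2, rfl⟩,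
    fun h => ⟨⟨r, hr, rfl, rfl⟩, fun _ ⟨r', hr', heq, hw⟩ => hw ▸ h r' ⟨hr', heq⟩⟩⟩

theorem RSet_eq_singleton_of_probe_eq (hH : H.Connected) (hr : ValidTraj H r) {i : Fin k}
    (h : A (probeHist H A r t) i = r t) : RSet H A r t = {r t} := by
  refine (RSet_eq_singleton_iff hr).2 fun r' hr' => ?_
  have hdist := dist_eq_of_mem_consistentTraj hr' t.lt_succ_self i
  rw [h, dist_self, hH.dist_eq_zero_iff] at hdist
  exact hdist.symm

theorem exists_strategy_of_rule (H : SimpleGraph X) (P : ℕ → Set (ℕ → X) → Fin k → X) :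
    ∃ B : CopStrategy X k, ∀ r t, B (probeHist H B r t) = P t (consistentTraj H B r t) := by
  let update (σ : ℕ × Set (ℕ → X)) (a : Fin k → ℕ) : ℕ × Set (ℕ → X) :=
    (σ.1 + 1, {r' ∈ σ.2 | ∀ i, H.dist (P σ.1 σ.2 i) (r' σ.1) = a i})
  let state (L : List (Fin k → ℕ)) : ℕ × Set (ℕ → X) := L.foldl update (0, {r' | ValidTraj H r'})
  let B : CopStrategy X k := fun L => P (state L).1 (state L).2
  have state_eq (r : ℕ → X) (t : ℕ) : state (probeHist H B r t) = (t, consistentTraj H B r t) := by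
    induction t with
    | zero => simp [state, probeHist, consistentTraj]
    | succ t ih =>
      have hB : B (probeHist H B r t) = P t (consistentTraj H B r t) := by simp only [B, ih]
      have hstate : state (probeHist H B r (t + 1)) =
          update (state (probeHist H B r t)) fun i => H.dist (B (probeHist H B r t) i) (r t) := by
        rw [probeHist]
        exact List.foldl_concat ..
      rw [hstate, ih]
      refine Prod.ext rfl (Set.ext fun r' => ?_)
      simp only [update, mem_consistentTraj_succ, hB, Set.mem_sep_iff]
  exact ⟨B, fun r t => by simp only [B, state_eq]⟩

variable (H A) in
/-- The position to which a robber who has produced the probe results `L` is confined once he has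
been located; an arbitrary consistent position before that. -/
noncomputable def guess [Nonempty X] (L : List (Fin k → ℕ)) : X :=
  Classical.epsilon fun w =>
    ∃ r, ValidTraj H r ∧ probeHist H A r L.length = L ∧ r (L.length - 1) = w

theorem guess_probeHist [Nonempty X] (hr : ValidTraj H r) (h : RSet H A r t = {r t}) :
    guess H A (probeHist H A r (t + 1)) = r t := by
  rw [guess, length_probeHist, Nat.add_sub_cancel]
  obtain ⟨r', hr', heq, hw⟩ := Classical.epsilon_spec
    (p := fun w => ∃ r', ValidTraj H r' ∧ probeHist H A r' (t + 1) = probeHist H A r (t + 1) ∧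
      r' t = w) ⟨r t, r, hr, rfl, rfl⟩
  rw [← hw]
  exact (RSet_eq_singleton_iff hr).1 h r' ⟨hr', heq⟩

end Histories

section CaptureTime

variable {X : Type*} {H : SimpleGraph X} {k : ℕ}

theorem exists_bound_of_forall_exists [Finite X] {P : ℕ → (ℕ → X) → Prop}
    (hP : ∀ t r r', (∀ s < t, r' s = r s) → P t r → P t r') (h : ∀ r, ∃ t, P t r) :
    ∃ T, ∀ r, ∃ t < T, P t r := by
  let _ : TopologicalSpace X := ⊥
  have : DiscreteTopology X := ⟨rfl⟩
  let U (T : ℕ) : Set (ℕ → X) := {r | ∃ t < T, P t r}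
  have hopen (T : ℕ) : IsOpen (U T) := by
    refine isOpen_iff_mem_nhds.2 fun r ⟨t, ht, hr⟩ => Filter.mem_of_superset
      ((PiNat.isOpen_cylinder _ r t).mem_nhds (PiNat.self_mem_cylinder r t)) fun r' hr' => ?_
    exact ⟨t, ht, hP t r r' (PiNat.mem_cylinder_iff.1 hr') hr⟩
  have hcover : Set.univ ⊆ ⋃ T, U T := fun r _ =>
    let ⟨t, ht⟩ := h r
    Set.mem_iUnion.2 ⟨t + 1, t, t.lt_succ_self, ht⟩
  have hmono : Monotone U := fun _ _ hle _ ⟨t, ht, hr⟩ => ⟨t, ht.trans_le hle, hr⟩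
  obtain ⟨T, hT⟩ := isCompact_univ.elim_directed_cover U hopen hcover hmono.directed_le
  exact ⟨T, fun r => hT (Set.mem_univ r)⟩

theorem CopWinning.exists_bound [Finite X] {A : CopStrategy X k} (hA : CopWinning H A) :
    ∃ T, ∀ r, ValidTraj H r → ∃ t < T, RSet H A r t = {r t} := by
  let P (t : ℕ) (r : ℕ → X) : Prop :=
    (∀ s, s + 1 < t → r (s + 1) = r s ∨ H.Adj (r s) (r (s + 1))) →
      ∃ s < t, RSet H A r s = {r s}
  have hlocal (t : ℕ) (r r' : ℕ → X) (heq : ∀ s < t, r' s = r s) (hr : P t r) : P t r' := by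
    intro hvalid
    obtain ⟨s, hs, hR⟩ := hr fun s hs => by
      simpa only [heq s (by lia), heq (s + 1) hs] using hvalid s hs
    refine ⟨s, hs, ?_⟩
    rw [heq s hs, ← hR, RSet, RSet, probeHist_congr fun i hi => heq i (by lia)]
  have hwin (r : ℕ → X) : ∃ t, P t r := by
    by_cases hr : ValidTraj H r
    · obtain ⟨t, ht⟩ := hA r hr
      exact ⟨t + 1, fun _ => ⟨t, t.lt_succ_self, ht⟩⟩
    · obtain ⟨s, hs⟩ := not_forall.1 hr
      exact ⟨s + 2, fun h => absurd (h s (by lia)) hs⟩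
  obtain ⟨T, hT⟩ := exists_bound_of_forall_exists hlocal hwin
  refine ⟨T, fun r hr => ?_⟩
  obtain ⟨t, ht, htr⟩ := hT r
  obtain ⟨s, hs, hR⟩ := htr fun s _ => hr s
  exact ⟨s, hs.trans ht, hR⟩

theorem Localizable.captTime_spec [Finite X] (h : Localizable H k) :
    ∃ A : CopStrategy X k, ∀ r, ValidTraj H r → ∃ t < captTime H k, RSet H A r t = {r t} :=
  let ⟨A, hA⟩ := h
  let ⟨T, hT⟩ := hA.exists_bound
  Nat.sInf_mem (s := {T | ∃ A : CopStrategy X k, ∀ r, ValidTraj H r →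
    ∃ t < T, RSet H A r t = {r t}}) ⟨T, A, hT⟩

end CaptureTime

section Subdivision

variable {V : Type*} [LinearOrder V] {G : SimpleGraph V} {m : ℕ}

namespace SubVert

/-- The first endpoint of the thread containing `q`; a branch vertex is its own endpoint. -/
def fstEnd : SubVert V G m → V
  | .inl v => v
  | .inr (e, _) => e.1.1

/-- The second endpoint of the thread containing `q`; a branch vertex is its own endpoint. -/
def sndEnd : SubVert V G m → V
  | .inl v => v
  | .inr (e, _) => e.1.2

/-- The distance from `q.fstEnd` to `q` along the thread containing `q`. -/
def pos : SubVert V G m → ℕ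
  | .inl _ => 0
  | .inr (_, i) => i + 1

end SubVert

open SubVert

variable {p q : SubVert V G m}

theorem subdiv_adj_iff :
    (Subdiv G m).Adj p q ↔ p ≠ q ∧ (subPre G m p q ∨ subPre G m q p) := by
  rw [Subdiv, fromRel_adj]

@[simp]
theorem threadVert_zero {u v : V} (h : G.Adj u v) : threadVert G m u v h 0 = .inl u := by
  simp [threadVert]

theorem threadVert_of_le (hm : 1 ≤ m) {u v : V} (h : G.Adj u v) {x : ℕ} (hx : m ≤ x) :
    threadVert G m u v h x = .inl v := by
  rw [threadVert, dif_neg (by lia), dif_pos hx]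

variable (e : {e : V × V // G.Adj e.1 e.2 ∧ e.1 < e.2}) (i : Fin (m - 1))

theorem threadVert_succ :
    threadVert G m e.1.1 e.1.2 e.2.1 (i + 1) = .inr (e, i) := by
  rw [threadVert, dif_neg (by lia), dif_neg (by lia), dif_pos e.2.2]
  rfl

theorem validTraj_threadVert (hm : 1 ≤ m) {u v : V} (h : G.Adj u v) :
    ValidTraj (Subdiv G m) (threadVert G m u v h) := by
  intro x
  by_cases heq : threadVert G m u v h (x + 1) = threadVert G m u v h x
  · exact .inl heq
  refine .inr (subdiv_adj_iff.2 ⟨Ne.symm heq, ?_⟩)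
  obtain hx | hx := le_or_gt m x
  · rw [threadVert_of_le hm h hx, threadVert_of_le hm h (hx.trans x.le_succ)] at heq
    exact absurd rfl heq
  unfold threadVert
  split_ifs <;> simp only [subPre, true_and, false_or, or_false] <;> grind

/-- The distance to the point at distance `x` from one end of a thread of length `m`, measured
from a branch vertex at distances `α` and `β` from the two ends in the unsubdivided graph. -/
def threadDist (m x α β : ℕ) : ℕ :=
  min (m * α + x) (m * β + (m - x))

variable (G m) in
/-- The distance from the branch vertex `z` to `q` in the `m`-subdivision. -/
noncomputable def branchDist (z : V) (q : SubVert V G m) : ℕ :=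
  threadDist m q.pos (G.dist z q.fstEnd) (G.dist z q.sndEnd)

@[simp]
theorem branchDist_inl (z v : V) : branchDist G m z (.inl v) = m * G.dist z v := by
  simp [branchDist, threadDist, pos, fstEnd, sndEnd]

theorem branchDist_threadVert (hG : G.Connected) (z : V) {u v : V} (h : G.Adj u v) {x : ℕ}
    (hx : x ≤ m) :
    branchDist G m z (threadVert G m u v h x) = threadDist m x (G.dist z u) (G.dist z v) := by
  have huv := mul_dist_le_mul_dist_add hG h z m
  have hvu := mul_dist_le_mul_dist_add hG h.symm z m
  unfold threadVert
  split_ifs <;> simp only [branchDist, threadDist, pos, fstEnd, sndEnd] <;> lia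

theorem branchDist_le_of_subPre (hG : G.Connected) (z : V) (h : subPre G m p q) :
    branchDist G m z q ≤ branchDist G m z p + 1 ∧
      branchDist G m z p ≤ branchDist G m z q + 1 := by
  rcases p with u | ⟨e, i⟩ <;> rcases q with v | ⟨f, j⟩
  · obtain ⟨rfl, hadj⟩ := h
    have huv := mul_dist_le_mul_dist_add hG hadj z 1
    have hvu := mul_dist_le_mul_dist_add hG hadj.symm z 1
    simp only [branchDist_inl]
    exact ⟨huv, hvu⟩
  · have huv := mul_dist_le_mul_dist_add hG f.2.1 z m
    have hvu := mul_dist_le_mul_dist_add hG f.2.1.symm z m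
    rw [branchDist_inl]
    simp only [branchDist, threadDist, pos, fstEnd, sndEnd]
    rcases h with ⟨rfl, hj⟩ | ⟨rfl, hj⟩ <;> lia
  · exact h.elim
  · obtain ⟨heq, hij⟩ := h
    simp only at heq
    subst heq
    simp only [branchDist, threadDist, pos, fstEnd, sndEnd]
    lia

theorem branchDist_le_of_adj (hG : G.Connected) (z : V) (h : (Subdiv G m).Adj p q) :
    branchDist G m z q ≤ branchDist G m z p + 1 :=
  (subdiv_adj_iff.1 h).2.elim (fun h => (branchDist_le_of_subPre hG z h).1)
    fun h => (branchDist_le_of_subPre hG z h).2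

theorem edist_fstEnd_le (hm : 1 ≤ m) (q : SubVert V G m) :
    (Subdiv G m).edist (.inl q.fstEnd) q ≤ q.pos := by
  rcases q with v | ⟨e, i⟩
  · simp [fstEnd]
  · have h := (validTraj_threadVert hm e.2.1).edist_le 0 (i + 1)
    rwa [zero_add, threadVert_succ, threadVert_zero] at h

theorem edist_sndEnd_le (hm : 1 ≤ m) (q : SubVert V G m) :
    (Subdiv G m).edist (.inl q.sndEnd) q ≤ (m - q.pos : ℕ) := by
  rcases q with v | ⟨e, i⟩
  · simp [sndEnd]
  · have h := (validTraj_threadVert (m := m) hm e.2.1).edist_le_of_le (s := m) (t := i + 1)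
      (d := m - (i + 1)) (by lia) (by lia)
    rwa [threadVert_succ, threadVert_of_le hm _ le_rfl] at h

theorem edist_inl_inl_le (hG : G.Connected) (hm : 1 ≤ m) (u v : V) :
    (Subdiv G m).edist (.inl u) (.inl v) ≤ (m * G.dist u v : ℕ) := by
  obtain ⟨w, hw⟩ := hG.exists_walk_length_eq_dist u v
  rw [← hw]
  clear hw
  induction w with
  | nil => simp
  | @cons u v _ h w ih =>
    have hstep := (validTraj_threadVert hm h).edist_le 0 m
    rw [zero_add, threadVert_zero, threadVert_of_le hm h le_rfl] at hstep
    refine SimpleGraph.edist_triangle.trans ((add_le_add hstep ih).trans_eq ?_)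
    rw [Walk.length_cons, ← Nat.cast_add, Nat.mul_succ, Nat.add_comm]

theorem connected_subdiv (hG : G.Connected) (hm : 1 ≤ m) : (Subdiv G m).Connected := by
  have := hG.nonempty.map (Sum.inl : V → SubVert V G m)
  refine ⟨fun p q => ?_⟩
  have reach (q : SubVert V G m) : (Subdiv G m).Reachable (.inl q.fstEnd) q :=
    reachable_of_edist_ne_top ((edist_fstEnd_le hm q).trans_lt (ENat.natCast_lt_top _)).ne
  have hends : (Subdiv G m).Reachable (.inl p.fstEnd) (.inl q.fstEnd) :=
    reachable_of_edist_ne_top ((edist_inl_inl_le hG hm _ _).trans_lt (ENat.natCast_lt_top _)).ne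
  exact (reach p).symm.trans (hends.trans (reach q))

theorem dist_fstEnd_le (hm : 1 ≤ m) (q : SubVert V G m) :
    (Subdiv G m).dist (.inl q.fstEnd) q ≤ q.pos :=
  ENat.toNat_le_of_le_natCast (edist_fstEnd_le hm q)

theorem dist_sndEnd_le (hm : 1 ≤ m) (q : SubVert V G m) :
    (Subdiv G m).dist (.inl q.sndEnd) q ≤ m - q.pos :=
  ENat.toNat_le_of_le_natCast (edist_sndEnd_le hm q)

theorem dist_inl (hG : G.Connected) (hm : 1 ≤ m) (z : V) (q : SubVert V G m) :
    (Subdiv G m).dist (.inl z) q = branchDist G m z q := by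
  have hconn := connected_subdiv hG hm
  have dist_inl_inl_le (v : V) : (Subdiv G m).dist (.inl z) (.inl v) ≤ m * G.dist z v :=
    ENat.toNat_le_of_le_natCast (edist_inl_inl_le hG hm z v)
  apply le_antisymm
  · exact le_min
      (hconn.dist_triangle.trans (add_le_add (dist_inl_inl_le _) (dist_fstEnd_le hm q)))
      (hconn.dist_triangle.trans (add_le_add (dist_inl_inl_le _) (dist_sndEnd_le hm q)))
  · have h := le_add_dist_of_adj_le hconn (fun _ _ => branchDist_le_of_adj hG z) (.inl z) q
    rwa [branchDist_inl, SimpleGraph.dist_self, mul_zero, zero_add] at h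

/-- The length of a shortest walk from `p` to `q` through an endpoint of the thread of `p`. -/
noncomputable def distViaEnds (p q : SubVert V G m) : ℕ :=
  min (p.pos + branchDist G m p.fstEnd q) (m - p.pos + branchDist G m p.sndEnd q)

theorem dist_le_distViaEnds (hG : G.Connected) (hm : 1 ≤ m) (p q : SubVert V G m) :
    (Subdiv G m).dist p q ≤ distViaEnds p q := by
  have hconn := connected_subdiv hG hm
  rw [distViaEnds, ← dist_inl hG hm, ← dist_inl hG hm]
  refine le_min (hconn.dist_triangle.trans (Nat.add_le_add_right ?_ _))
    (hconn.dist_triangle.trans (Nat.add_le_add_right ?_ _))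
  · rw [SimpleGraph.dist_comm]
    exact dist_fstEnd_le hm p
  · rw [SimpleGraph.dist_comm]
    exact dist_sndEnd_le hm p

/-- The distance from the internal vertex `(e, i)`: along its thread `e` to a vertex of that
thread, and through an endpoint of `e` to all other vertices. -/
noncomputable def threadPotential : SubVert V G m → ℕ
  | .inl v => distViaEnds (.inr (e, i)) (.inl v)
  | .inr (f, j) => if f = e then (i - j) + (j - i) else distViaEnds (.inr (e, i)) (.inr (f, j))

theorem threadPotential_le_of_subPre (hG : G.Connected) (h : subPre G m p q) :
    threadPotential e i q ≤ threadPotential e i p + 1 ∧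
      threadPotential e i p ≤ threadPotential e i q + 1 := by
  have hends : distViaEnds (.inr (e, i)) q ≤ distViaEnds (.inr (e, i)) p + 1 ∧
      distViaEnds (.inr (e, i)) p ≤ distViaEnds (.inr (e, i)) q + 1 := by
    have hfst := branchDist_le_of_subPre hG e.1.1 h
    have hsnd := branchDist_le_of_subPre hG e.1.2 h
    simp only [distViaEnds, fstEnd, sndEnd]
    lia
  rcases p with u | ⟨f, j⟩ <;> rcases q with v | ⟨f', j'⟩
  · exact hends
  · by_cases he : f' = e
    · subst he
      have hdist : G.dist f'.1.1 f'.1.2 = 1 := dist_eq_one_iff_adj.2 f'.2.1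
      have hdist' : G.dist f'.1.2 f'.1.1 = 1 := dist_eq_one_iff_adj.2 f'.2.1.symm
      rcases h with ⟨rfl, hj⟩ | ⟨rfl, hj⟩ <;>
        simp only [threadPotential, distViaEnds, branchDist_inl, pos, fstEnd, sndEnd, if_pos,
          SimpleGraph.dist_self, hdist, hdist'] <;> lia
    · simpa only [threadPotential, if_neg he] using hends
  · exact h.elim
  · obtain ⟨heq, hj⟩ := h
    simp only at heq
    subst heq
    by_cases he : f = e
    · simp only [threadPotential, if_pos he]
      lia
    · simpa only [threadPotential, if_neg he] using hends

theorem threadPotential_le_dist (hG : G.Connected) (hm : 1 ≤ m) (q : SubVert V G m) :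
    threadPotential e i q ≤ (Subdiv G m).dist (.inr (e, i)) q := by
  have h := le_add_dist_of_adj_le (connected_subdiv hG hm) (f := threadPotential e i)
    (fun _ _ h => (subdiv_adj_iff.1 h).2.elim (fun h => (threadPotential_le_of_subPre e i hG h).1)
      fun h => (threadPotential_le_of_subPre e i hG h).2) (.inr (e, i)) q
  simpa [threadPotential] using h

theorem dist_eq_distViaEnds (hG : G.Connected) (hm : 1 ≤ m)
    (h : ∀ e i j, p = .inr (e, i) → q ≠ .inr (e, j)) :
    (Subdiv G m).dist p q = distViaEnds p q := by
  refine (dist_le_distViaEnds hG hm p q).antisymm ?_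
  rcases p with z | ⟨e, i⟩
  · rw [dist_inl hG hm]
    exact (min_le_left _ _).trans_eq (zero_add _)
  · refine le_trans ?_ (threadPotential_le_dist e i hG hm q)
    rcases q with v | ⟨f, j⟩
    · exact le_rfl
    · rw [threadPotential, if_neg fun he => h e i j rfl (by rw [he])]

end Subdivision

section Lift

open SubVert

variable {V : Type*} [LinearOrder V] {G : SimpleGraph V} {m : ℕ}

open Classical in
/-- The position of the lifted robber `x` steps after leaving the branch vertex `u`, when the robber
on `G` moves from `u` to `v`; a robber who stays put waits at `u`. -/
noncomputable def seg (G : SimpleGraph V) (m : ℕ) (u v : V) (x : ℕ) : SubVert V G m :=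
  if h : G.Adj u v then threadVert G m u v h x else .inl u

/-- The trajectory on the `m`-subdivision which follows the trajectory `g` on `G`, spending `m`
rounds on each step of `g`. -/
noncomputable def liftTraj (G : SimpleGraph V) (m : ℕ) (g : ℕ → V) (t : ℕ) : SubVert V G m :=
  seg G m (g (t / m)) (g (t / m + 1)) (t % m)

@[simp]
theorem seg_zero (u v : V) : seg G m u v 0 = .inl u := by
  unfold seg
  split_ifs with h
  · exact threadVert_zero h
  · rfl

theorem seg_last (hm : 1 ≤ m) {u v : V} (h : v = u ∨ G.Adj u v) : seg G m u v m = .inl v := by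
  unfold seg
  split_ifs with hadj
  · exact threadVert_of_le hm hadj le_rfl
  · rw [h.resolve_right hadj]

theorem validTraj_seg (hm : 1 ≤ m) (u v : V) : ValidTraj (Subdiv G m) (seg G m u v) := by
  intro x
  unfold seg
  split_ifs with h
  · exact validTraj_threadVert hm h x
  · exact .inl rfl

theorem liftTraj_mul_add (hm : 1 ≤ m) {g : ℕ → V} (hg : ValidTraj G g) (t : ℕ) {x : ℕ}
    (hx : x ≤ m) : liftTraj G m g (m * t + x) = seg G m (g t) (g (t + 1)) x := by
  obtain hx | rfl := hx.lt_or_eq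
  · rw [liftTraj, Nat.mul_add_div hm, Nat.mul_add_mod, Nat.div_eq_of_lt hx, Nat.mod_eq_of_lt hx,
      add_zero]
  · rw [seg_last hm (hg t), ← Nat.mul_succ, liftTraj, Nat.mul_div_cancel_left _ hm,
      Nat.mul_mod_right, seg_zero]

theorem validTraj_liftTraj (hm : 1 ≤ m) {g : ℕ → V} (hg : ValidTraj G g) :
    ValidTraj (Subdiv G m) (liftTraj G m g) := by
  intro t
  have hlt : t % m < m := Nat.mod_lt t hm
  rw [← Nat.div_add_mod t m, add_assoc, liftTraj_mul_add hm hg _ hlt.le,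
    liftTraj_mul_add hm hg _ hlt]
  exact validTraj_seg hm _ _ _

theorem eq_fstEnd_or_eq_sndEnd_seg (u v : V) {x : ℕ} (hx : x < m) :
    u = (seg G m u v x).fstEnd ∨ u = (seg G m u v x).sndEnd := by
  unfold seg threadVert
  split_ifs
  · exact .inl rfl
  · lia
  · exact .inl rfl
  · exact .inr rfl
  · exact .inl rfl

open Classical in
theorem branchDist_seg (hG : G.Connected) (z : V) {u v : V} (huv : v = u ∨ G.Adj u v) {x : ℕ}
    (hx : x ≤ m) :
    branchDist G m z (seg G m u v x) =
      threadDist m (if G.Adj u v then x else 0) (G.dist z u) (G.dist z v) := by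
  by_cases h : G.Adj u v
  · rw [seg, dif_pos h, if_pos h, branchDist_threadVert hG z h hx]
  · rw [seg, dif_neg h, if_neg h, huv.resolve_right h, branchDist_inl]
    simp [threadDist]

theorem dist_seg (hG : G.Connected) (hm : 1 ≤ m) {p : SubVert V G m} {u : V}
    (hfst : u ≠ p.fstEnd) (hsnd : u ≠ p.sndEnd) (v : V) {x : ℕ} (hx : x < m) :
    (Subdiv G m).dist p (seg G m u v x) = distViaEnds p (seg G m u v x) := by
  refine dist_eq_distViaEnds hG hm fun e i j hp hq => ?_
  have hu := eq_fstEnd_or_eq_sndEnd_seg (G := G) u v hx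
  rw [hq] at hu
  subst hp
  exact hu.elim hfst hsnd

end Lift

section Sweep

open SubVert

variable {V : Type*} [LinearOrder V] {G : SimpleGraph V} {m : ℕ} {q : SubVert V G m}
  {e : {e : V × V // G.Adj e.1 e.2 ∧ e.1 < e.2}} {i : Fin (m - 1)}

theorem eq_fstEnd_or_eq_sndEnd_of_branchDist_lt (hG : G.Connected) {z : V}
    (h : branchDist G m z q < m) : z = q.fstEnd ∨ z = q.sndEnd := by
  by_contra! hne
  have hfst := Nat.le_mul_of_pos_right m (hG.pos_dist_of_ne hne.1)
  have hsnd := Nat.le_mul_of_pos_right m (hG.pos_dist_of_ne hne.2)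
  unfold branchDist threadDist at h
  lia

theorem branchDist_fst_inr : branchDist G m e.1.1 (.inr (e, i)) = i + 1 := by
  have := i.2
  simp only [branchDist, threadDist, pos, fstEnd, sndEnd, SimpleGraph.dist_self,
    dist_eq_one_iff_adj.2 e.2.1]
  lia

theorem branchDist_snd_inr : branchDist G m e.1.2 (.inr (e, i)) = m - (i + 1) := by
  have := i.2
  simp only [branchDist, threadDist, pos, fstEnd, sndEnd, SimpleGraph.dist_self,
    dist_eq_one_iff_adj.2 e.2.1.symm]
  lia

theorem eq_inl_of_branchDist_eq (hG : G.Connected) {v w : V}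
    (hnear : 2 * branchDist G m w q < m) (h : branchDist G m v q = m * G.dist v w) :
    q = .inl w := by
  have hw := eq_fstEnd_or_eq_sndEnd_of_branchDist_lt hG (by lia : branchDist G m w q < m)
  rcases q with u | ⟨e, i⟩
  · exact congrArg _ (hw.elim Eq.symm Eq.symm)
  exfalso
  have hends : m * G.dist v e.1.2 = m * G.dist v e.1.1 ∨
      m * G.dist v e.1.2 = m * G.dist v e.1.1 + m ∨
      m * G.dist v e.1.1 = m * G.dist v e.1.2 + m := by
    simp only [← Nat.mul_succ]
    have := e.2.1.diff_dist_adj (u := v)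
    grind
  have := i.2
  obtain rfl | rfl := hw <;> simp only [fstEnd, sndEnd] at hnear h
  · rw [branchDist_fst_inr] at hnear
    simp only [branchDist, threadDist, pos, fstEnd, sndEnd] at h
    lia
  · rw [branchDist_snd_inr] at hnear
    simp only [branchDist, threadDist, pos, fstEnd, sndEnd] at h
    lia

theorem eq_inr_of_branchDist_eq (hG : G.Connected) {x z : V} (hends : s(x, z) = s(e.1.1, e.1.2))
    (hx : branchDist G m x q < m) (hz : branchDist G m z q = branchDist G m z (.inr (e, i))) :
    q = .inr (e, i) := by
  have hzlt : branchDist G m z q < m := by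
    have := i.2
    rw [hz]
    rcases Sym2.eq_iff.1 hends with ⟨-, rfl⟩ | ⟨-, rfl⟩
    · rw [branchDist_snd_inr]
      lia
    · rw [branchDist_fst_inr]
      lia
  have hxq := eq_fstEnd_or_eq_sndEnd_of_branchDist_lt hG hx
  have hzq := eq_fstEnd_or_eq_sndEnd_of_branchDist_lt hG hzlt
  have hlt := e.2.2
  rcases q with u | ⟨f, j⟩
  · simp only [fstEnd, sndEnd, or_self] at hxq hzq
    grind
  have hef : f = e := by
    have := f.2.2
    simp only [fstEnd, sndEnd] at hxq hzq
    ext <;> grind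
  subst hef
  have := i.2
  have := j.2
  have hij : j = i := by
    rcases Sym2.eq_iff.1 hends with ⟨-, rfl⟩ | ⟨-, rfl⟩
    · rw [branchDist_snd_inr, branchDist_snd_inr] at hz
      lia
    · rw [branchDist_fst_inr, branchDist_fst_inr] at hz
      lia
  rw [hij]

theorem eq_of_adj_inr_inr {f : {e : V × V // G.Adj e.1 e.2 ∧ e.1 < e.2}} {j : Fin (m - 1)}
    (h : (Subdiv G m).Adj (.inr (e, i)) (.inr (f, j))) : f = e :=
  (subdiv_adj_iff.1 h).2.elim (fun h => h.1.symm) fun h => h.1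

theorem exists_eq_inr_of_forall_ne_inl {r : ℕ → SubVert V G m} (hr : ValidTraj (Subdiv G m) r)
    {a b : ℕ} (hinl : ∀ t, a ≤ t → t < b → ∀ v, r t ≠ .inl v) (ha : r a = .inr (e, i)) {t : ℕ}
    (hat : a ≤ t) (htb : t < b) : ∃ j, r t = .inr (e, j) := by
  induction t, hat using Nat.le_induction with
  | base => exact ⟨i, ha⟩
  | succ t hat ih =>
    obtain ⟨j, hj⟩ := ih (by lia)
    obtain hstay | hadj := hr t
    · exact ⟨j, hstay.trans hj⟩
    rcases hq : r (t + 1) with v | ⟨f, j'⟩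
    · exact absurd hq (hinl _ (hat.trans t.le_succ) htb v)
    rw [hj, hq] at hadj
    exact ⟨j', by rw [eq_of_adj_inr_inr hadj]⟩

theorem exists_sweep (V : Type*) [Finite V] [Nonempty V] :
    ∃ c : ℕ → V, ∀ v, ∃ s < Nat.card V, c s = v ∧ c (Nat.card V + s) = v := by
  let equiv := Finite.equivFin V
  refine ⟨fun t => equiv.symm ⟨t % Nat.card V, Nat.mod_lt t Nat.card_pos⟩, fun v =>
    ⟨equiv v, (equiv v).2, ?_, ?_⟩⟩
  · simp [Nat.mod_eq_of_lt (equiv v).2]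
  · simp [Nat.mod_eq_of_lt (equiv v).2]

variable (G m) in
/-- The one-cop strategy probing the branch vertices `c 0`, `c 1`, `c 2`, … in turn. -/
def sweepStrategy (c : ℕ → V) : CopStrategy (SubVert V G m) 1 :=
  fun L _ => .inl (c L.length)

variable {c : ℕ → V} {r r' : ℕ → SubVert V G m} {n s t : ℕ}

theorem ValidTraj.branchDist_le_add (hG : G.Connected) (hm : 1 ≤ m)
    (hr : ValidTraj (Subdiv G m) r) (v : V) {d : ℕ} (hs : s ≤ t + d) (ht : t ≤ s + d) :
    branchDist G m v (r t) ≤ branchDist G m v (r s) + d := by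
  simpa only [dist_inl hG hm] using hr.dist_le_add (connected_subdiv hG hm) (.inl v) hs ht

theorem branchDist_eq_of_sweep (hG : G.Connected) (hm : 1 ≤ m)
    (hr' : r' ∈ consistentTraj (Subdiv G m) (sweepStrategy G m c) r (t + 1)) (hst : s ≤ t) :
    branchDist G m (c s) (r' s) = branchDist G m (c s) (r s) := by
  have h := dist_eq_of_mem_consistentTraj hr' (Nat.lt_succ_of_le hst) 0
  rwa [sweepStrategy, length_probeHist, dist_inl hG hm, dist_inl hG hm] at h

theorem branchDist_le_add_of_sweep (hG : G.Connected) (hm : 1 ≤ m)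
    (hr : ValidTraj (Subdiv G m) r)
    (hr' : r' ∈ consistentTraj (Subdiv G m) (sweepStrategy G m c) r (t + 1))
    (hst : s ≤ t) (htn : t < 2 * n) :
    branchDist G m (c s) (r' t) ≤ branchDist G m (c s) (r t) + 4 * n := by
  have hforth := hr'.1.branchDist_le_add hG hm (c s) (s := s) (t := t) (d := 2 * n) (by lia)
    (by lia)
  have hback := hr.branchDist_le_add hG hm (c s) (s := t) (t := s) (d := 2 * n) (by lia) (by lia)
  have hprobe := branchDist_eq_of_sweep hG hm hr' hst
  lia

theorem RSet_sweep_of_eq_inl (hG : G.Connected) (hm : 10 * n < m)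
    (hr : ValidTraj (Subdiv G m) r) (htn : t < 2 * n) (hs : s ≤ t) (hrt : r t = .inl (c s)) :
    RSet (Subdiv G m) (sweepStrategy G m c) r t = {r t} := by
  refine (RSet_eq_singleton_iff hr).2 fun r' hr' => ?_
  have hnear := branchDist_le_add_of_sweep hG (by lia) hr hr' hs htn
  have hprobe := branchDist_eq_of_sweep hG (by lia) hr' le_rfl
  rw [hrt, branchDist_inl] at hnear hprobe
  rw [SimpleGraph.dist_self] at hnear
  rw [hrt]
  exact eq_inl_of_branchDist_eq hG (by lia) hprobe

-- The cop waits for a probe at the endpoint of the thread farther from the robber: the distance to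
-- it fixes the position, provided that the thread is known from proximity to the other endpoint.
theorem exists_RSet_sweep_of_forall_ne_inl (hG : G.Connected) (hm : 10 * n < m) (hn : 0 < n)
    (hc : ∀ v, ∃ s < n, c s = v ∧ c (n + s) = v) (hr : ValidTraj (Subdiv G m) r)
    (hinl : ∀ t, n ≤ t → t < 2 * n → ∀ v, r t ≠ .inl v) :
    ∃ t, RSet (Subdiv G m) (sweepStrategy G m c) r t = {r t} := by
  rcases hrn : r n with w | ⟨e, i⟩
  · exact absurd hrn (hinl n le_rfl (by lia) w)
  obtain ⟨x, z, hends, hx⟩ : ∃ x z, s(x, z) = s(e.1.1, e.1.2) ∧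
      2 * branchDist G m x (r n) ≤ m := by
    have := i.2
    rw [hrn]
    obtain hi | hi := le_total (2 * ((i : ℕ) + 1)) m
    · exact ⟨e.1.1, e.1.2, rfl, by rw [branchDist_fst_inr]; lia⟩
    · exact ⟨e.1.2, e.1.1, Sym2.eq_swap, by rw [branchDist_snd_inr]; lia⟩
  obtain ⟨s, hs, -, hz⟩ := hc z
  obtain ⟨s', hs', rfl, -⟩ := hc x
  refine ⟨n + s, (RSet_eq_singleton_iff hr).2 fun r' hr' => ?_⟩
  obtain ⟨j, hj⟩ := exists_eq_inr_of_forall_ne_inl hr hinl hrn (Nat.le_add_right n s) (by lia)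
  have hnear := branchDist_le_add_of_sweep (n := n) (s := s') hG (by lia) hr hr' (by lia) (by lia)
  have hmove := hr.branchDist_le_add hG (by lia) (c s') (s := n) (t := n + s) (d := n) (by lia)
    (by lia)
  have hprobe := branchDist_eq_of_sweep hG (by lia) hr' le_rfl
  rw [hz, hj] at hprobe
  rw [hj]
  exact eq_inr_of_branchDist_eq hG hends (by lia) hprobe

theorem localizable_subdiv_of_lt [Finite V] (hG : G.Connected) (hm : 10 * Nat.card V < m) :
    Localizable (Subdiv G m) 1 := by
  have := hG.nonempty
  obtain ⟨c, hc⟩ := exists_sweep V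
  refine ⟨sweepStrategy G m c, fun r hr => ?_⟩
  by_cases hbranch : ∃ t, Nat.card V ≤ t ∧ t < 2 * Nat.card V ∧ ∃ w, r t = .inl w
  · obtain ⟨t, hnt, htn, w, hw⟩ := hbranch
    obtain ⟨s, hs, rfl, -⟩ := hc w
    exact ⟨t, RSet_sweep_of_eq_inl hG hm hr htn (hs.le.trans hnt) hw⟩
  · push Not at hbranch
    exact exists_RSet_sweep_of_forall_ne_inl hG hm Nat.card_pos hc hr hbranch

theorem subdivNum_spec [Finite V] (hG : G.Connected) :
    1 ≤ subdivNum G ∧ Localizable (Subdiv G (subdivNum G)) 1 :=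
  Nat.sInf_mem (s := {m | 1 ≤ m ∧ Localizable (Subdiv G m) 1})
    ⟨10 * Nat.card V + 1, Nat.le_add_left .., localizable_subdiv_of_lt hG (Nat.lt_succ_self _)⟩

end Sweep

section Encard

variable {ι α : Type*}

theorem encard_biUnion_le_mul {S : Set ι} {f : ι → Set α} {N B : ℕ} (hS : S.encard ≤ N)
    (hf : ∀ i ∈ S, (f i).encard ≤ B) : (⋃ i ∈ S, f i).encard ≤ (N * B : ℕ) := by
  have hfin : S.Finite := Set.finite_of_encard_le_coe hS
  calc (⋃ i ∈ S, f i).encard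
      = (⋃ i ∈ hfin.toFinset, f i).encard := by simp only [Set.Finite.mem_toFinset]
    _ ≤ ∑ i ∈ hfin.toFinset, (f i).encard := Finset.set_encard_biUnion_le _ _
    _ ≤ hfin.toFinset.card • (B : ℕ∞) :=
        Finset.sum_le_card_nsmul _ _ _ fun i hi => hf i (hfin.mem_toFinset.1 hi)
    _ ≤ (N * B : ℕ) := by
        rw [nsmul_eq_mul, Nat.cast_mul, ← hfin.encard_eq_coe_toFinset_card]
        exact mul_le_mul_left hS _

theorem exists_subset_range_of_encard_le [Nonempty α] (S : Set α) (k : ℕ) :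
    ∃ f : Fin k → α, S.encard ≤ k → S ⊆ Set.range f := by
  by_cases hS : S.encard ≤ k
  · have := (Set.finite_of_encard_le_coe hS).fintype
    obtain ⟨e⟩ : Nonempty (S ↪ Fin k) := Function.Embedding.nonempty_of_card_le <| by
      rw [Set.encard_eq_coe_toFinset_card, Set.toFinset_card] at hS
      rw [Fintype.card_fin]
      exact_mod_cast hS
    exact ⟨Function.extend e Subtype.val fun _ => Classical.arbitrary α, fun _ x hx =>
      ⟨e ⟨x, hx⟩, e.injective.extend_apply _ _ _⟩⟩
  · exact ⟨fun _ => Classical.arbitrary α, fun h => absurd h hS⟩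

theorem sum_range_succ_pow_le {B : ℕ} (hB : 2 ≤ B) (w : ℕ) :
    ∑ d ∈ Finset.range (w + 1), B ^ d ≤ 2 * B ^ w := by
  have := Nat.geomSum_lt hB (s := Finset.range w) fun _ => Finset.mem_range.1
  rw [Finset.sum_range_succ]
  lia

theorem encard_probeHist_succ_le {X : Type*} {H : SimpleGraph X} {k : ℕ} {A : CopStrategy X k}
    {ρ : ι → ℕ → X} {R R' : Set ι} {t N B : ℕ} (hsub : R' ⊆ R)
    (hN : ((fun g => probeHist H A (ρ g) t) '' R).encard ≤ N)
    (hB : ∀ L, ((fun g i => H.dist (A L i) (ρ g t)) ''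
      {g ∈ R' | probeHist H A (ρ g) t = L}).encard ≤ B) :
    ((fun g => probeHist H A (ρ g) (t + 1)) '' R').encard ≤ (N * B : ℕ) := by
  refine (Set.encard_le_encard ?_).trans (encard_biUnion_le_mul hN fun L _ =>
    (Set.encard_image_le (fun a => L ++ [a]) _).trans (hB L))
  rintro _ ⟨g, hg, rfl⟩
  exact Set.mem_biUnion (Set.mem_image_of_mem _ (hsub hg)) ⟨_, ⟨g, ⟨hg, rfl⟩, rfl⟩, rfl⟩

end Encard

section ProbeValues

open SubVert

/-- The values of `threadDist` for a starting vertex which is not an endpoint of the thread, in a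
graph of diameter at most `δ`; here `x` is the position of the target on its thread and the distance
`α` to the near endpoint is positive. -/
def threadDistValues (m δ x : ℕ) : Set ℕ :=
  {d | ∃ α β, 1 ≤ α ∧ α ≤ δ ∧ β ≤ δ ∧ threadDist m x α β = d}

-- The larger of `m * δ + x` and `m * δ + (m - x)` is never attained strictly below the other branch
-- of the minimum, which saves one of the `2 * δ + 1` candidate values.
theorem encard_threadDistValues_le (m δ x : ℕ) (hδ : 1 ≤ δ) :
    (threadDistValues m δ x).encard ≤ (2 * δ : ℕ) := by
  have encard_le {a b : ℕ} (hab : a + b = 2 * δ) {I J : Finset ℕ} (hI : I.card = a)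
      (hJ : J.card = b) (hsub : threadDistValues m δ x ⊆
        ↑(I.image (m * · + x) ∪ J.image (m * · + (m - x)))) :
      (threadDistValues m δ x).encard ≤ (2 * δ : ℕ) := by
    refine (Set.encard_le_encard hsub).trans ?_
    rw [Set.encard_coe_eq_coe_finsetCard, ← hab, ← hI, ← hJ]
    exact_mod_cast (Finset.card_union_le _ _).trans
      (add_le_add Finset.card_image_le Finset.card_image_le)
  have min_mem {α β : ℕ} {I J : Finset ℕ} (hI : m * α + x ≤ m * β + (m - x) → α ∈ I)
      (hJ : m * β + (m - x) < m * α + x → β ∈ J) :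
      threadDist m x α β ∈ I.image (m * · + x) ∪ J.image (m * · + (m - x)) := by
    rw [Finset.mem_union]
    obtain h | h := le_or_gt (m * α + x) (m * β + (m - x))
    · exact .inl (Finset.mem_image.2 ⟨α, hI h, (min_eq_left h).symm⟩)
    · exact .inr (Finset.mem_image.2 ⟨β, hJ h, (min_eq_right h.le).symm⟩)
  obtain hx | hx := le_or_gt (2 * x) m
  · refine encard_le (I := .Icc 1 δ) (J := .range δ) (two_mul δ).symm (by simp) (by simp) ?_
    rintro _ ⟨α, β, h1, hα, hβ, rfl⟩
    refine Finset.mem_coe.2 (min_mem (fun _ => by grind) fun h => Finset.mem_range.2 ?_)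
    refine hβ.lt_of_ne fun hβ => ?_
    have := Nat.mul_le_mul_left m hα
    lia
  · refine encard_le (I := .Icc 1 (δ - 1)) (J := .range (δ + 1)) (a := δ - 1) (b := δ + 1) (by lia)
      (by simp) (by simp) ?_
    rintro _ ⟨α, β, h1, hα, hβ, rfl⟩
    refine Finset.mem_coe.2 (min_mem (fun h => Finset.mem_Icc.2 ⟨h1, ?_⟩) fun _ => by grind)
    refine Nat.le_sub_one_of_lt (hα.lt_of_ne fun hα => ?_)
    have := Nat.mul_le_mul_left m hβ
    lia

variable {V : Type*} [LinearOrder V] {G : SimpleGraph V} {m : ℕ}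

theorem encard_dist_seg_le (hG : G.Connected) (hm : 1 ≤ m) {δ : ℕ} (hδ : 1 ≤ δ)
    (hdist : ∀ u v, G.dist u v ≤ δ) (p : SubVert V G m) {x : ℕ} (hx : x < m) (moves : Prop) :
    {d | ∃ u v, (v = u ∨ G.Adj u v) ∧ (G.Adj u v ↔ moves) ∧ u ≠ p.fstEnd ∧ u ≠ p.sndEnd ∧
      (Subdiv G m).dist p (seg G m u v x) = d}.encard ≤ (4 * δ : ℕ) := by
  classical
  let D : Set ℕ := threadDistValues m δ (if moves then x else 0)
  have hD : D.encard ≤ (2 * δ : ℕ) := encard_threadDistValues_le _ _ _ hδ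
  have hsum : (2 * δ : ℕ) + (2 * δ : ℕ) = ((4 * δ : ℕ) : ℕ∞) := by
    rw [← Nat.cast_add]
    congr 1
    lia
  refine (Set.encard_le_encard (t := (p.pos + ·) '' D ∪ (m - p.pos + ·) '' D) ?_).trans
    ((Set.encard_union_le _ _).trans ((add_le_add ((Set.encard_image_le _ _).trans hD)
      ((Set.encard_image_le _ _).trans hD)).trans_eq hsum))
  rintro _ ⟨u, v, huv, hmoves, hfst, hsnd, rfl⟩
  have branchDist_mem {z : V} (hz : u ≠ z) : branchDist G m z (seg G m u v x) ∈ D := by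
    simp only [branchDist_seg hG z huv hx.le, hmoves]
    exact ⟨_, _, hG.pos_dist_of_ne hz.symm, hdist z u, hdist z v, rfl⟩
  rw [dist_seg hG hm hfst hsnd v hx, distViaEnds]
  obtain h | h := min_choice (p.pos + branchDist G m p.fstEnd (seg G m u v x))
      (m - p.pos + branchDist G m p.sndEnd (seg G m u v x))
  · exact .inl ⟨_, branchDist_mem hfst, h.symm⟩
  · exact .inr ⟨_, branchDist_mem hsnd, h.symm⟩

end ProbeValues

section Targets

open SubVert

variable {V : Type*} {G : SimpleGraph V} {m T j : ℕ} {g g' : ℕ → V} {K : Set (ℕ → V)}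

/-- The rounds of the game on the `m`-subdivision in which the lift of a trajectory on `G` can be
within distance `m` of the branch vertex it visits at time `T`. -/
def window (m T : ℕ) : Set ℕ :=
  Set.Icc (m * T - m) (m * T + m)

theorem mem_window_div (hm : 1 ≤ m) (j : ℕ) : j ∈ window m (j / m) := by
  have := Nat.div_add_mod j m
  have := Nat.mod_lt j hm
  constructor <;> lia

theorem mem_window_div_succ (hm : 1 ≤ m) (j : ℕ) : j ∈ window m (j / m + 1) := by
  have := Nat.div_add_mod j m
  have := Nat.mod_lt j hm
  constructor <;> rw [Nat.mul_succ] <;> lia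

theorem succ_mem_window_div (hm : 1 ≤ m) (j : ℕ) : j + 1 ∈ window m (j / m) := by
  have := Nat.div_add_mod j m
  have := Nat.mod_lt j hm
  constructor <;> lia

open Classical in
/-- The times up to `T` at which `g` moves to an adjacent vertex rather than staying put. -/
noncomputable def moveTimes (G : SimpleGraph V) (g : ℕ → V) (T : ℕ) : Finset ℕ :=
  {t ∈ Finset.range (T + 1) | G.Adj (g t) (g (t + 1))}

theorem moveTimes_subset_range (g : ℕ → V) (T : ℕ) : moveTimes G g T ⊆ Finset.range (T + 1) := by
  classical exact Finset.filter_subset _ _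

theorem mem_moveTimes {t : ℕ} (ht : t ≤ T) :
    t ∈ moveTimes G g T ↔ G.Adj (g t) (g (t + 1)) := by
  simp [moveTimes, Nat.lt_succ_of_le ht]

variable [LinearOrder V]

theorem dist_seg_congr (hG : G.Connected) (hm : 1 ≤ m) {p : SubVert V G m} {u v u' v' : V}
    (huv : v = u ∨ G.Adj u v) (huv' : v' = u' ∨ G.Adj u' v') (hadj : G.Adj u v ↔ G.Adj u' v')
    (hends : ∀ z, z = p.fstEnd ∨ z = p.sndEnd →
      u ≠ z ∧ G.dist z u' = G.dist z u ∧ G.dist z v' = G.dist z v) {x : ℕ} (hx : x < m) :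
    (Subdiv G m).dist p (seg G m u' v' x) = (Subdiv G m).dist p (seg G m u v x) := by
  have ne_of_end (z : V) (hz : z = p.fstEnd ∨ z = p.sndEnd) : u' ≠ z := fun h => by
    have hzero := (hends z hz).2.1
    rw [h, SimpleGraph.dist_self, eq_comm, hG.dist_eq_zero_iff] at hzero
    exact (hends z hz).1 hzero.symm
  have branchDist_eq (z : V) (hz : z = p.fstEnd ∨ z = p.sndEnd) :
      branchDist G m z (seg G m u' v' x) = branchDist G m z (seg G m u v x) := by
    rw [branchDist_seg hG z huv hx.le, branchDist_seg hG z huv' hx.le, (hends z hz).2.1,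
      (hends z hz).2.2, hadj]
  rw [dist_seg hG hm (hends _ (.inl rfl)).1 (hends _ (.inr rfl)).1 v hx,
    dist_seg hG hm (ne_of_end _ (.inl rfl)) (ne_of_end _ (.inr rfl)) v' hx, distViaEnds,
    distViaEnds, branchDist_eq _ (.inl rfl), branchDist_eq _ (.inr rfl)]

variable [Nonempty V] (A : CopStrategy (SubVert V G m) 1)

/-- The first `j` answers received by `A` on the `m`-subdivision when the robber follows the lift
of `g`. -/
noncomputable def liftHist (g : ℕ → V) (j : ℕ) : List (Fin 1 → ℕ) :=
  probeHist (Subdiv G m) A (liftTraj G m g) j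

/-- The branch vertices which the simulation of `A` on `G` has to probe after `A` has received the
answers `L`: the endpoints of the threads containing its next probe and its current guess. -/
noncomputable def targets (L : List (Fin 1 → ℕ)) : Finset V :=
  {(A L 0).fstEnd, (A L 0).sndEnd, (guess (Subdiv G m) A L).fstEnd,
    (guess (Subdiv G m) A L).sndEnd}

theorem mem_targets_of_probe_end {L : List (Fin 1 → ℕ)} {z : V}
    (hz : z = (A L 0).fstEnd ∨ z = (A L 0).sndEnd) : z ∈ targets A L := by
  rcases hz with rfl | rfl <;> simp [targets]

theorem mem_targets_of_guess_end {L : List (Fin 1 → ℕ)} {z : V}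
    (hz : z = (guess (Subdiv G m) A L).fstEnd ∨ z = (guess (Subdiv G m) A L).sndEnd) :
    z ∈ targets A L := by
  rcases hz with rfl | rfl <;> simp [targets]

/-- Along the lift of `g`, no target in the window of `T` before round `j` is `g T`. -/
def Unseen (T : ℕ) (g : ℕ → V) (j : ℕ) : Prop :=
  ∀ i ∈ window m T, i < j → g T ∉ targets A (liftHist A g i)

/-- The vertices of `G` to be probed at time `T` against the trajectories in `K`: the targets in
the window of `T`, where a trajectory is followed only until its own vertex becomes a target. -/
def probeSet (T : ℕ) (K : Set (ℕ → V)) : Set V :=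
  {z | ∃ g ∈ K, ∃ j ∈ window m T, Unseen A T g j ∧ z ∈ targets A (liftHist A g j)}

/-- Before time `T`, the cops on `G` have compared all trajectories in `K` with all targets in the
relevant windows: no trajectory was at a target, and no target separates two trajectories. -/
def Tracked (T : ℕ) (K : Set (ℕ → V)) : Prop :=
  ∀ t < T, ∀ g ∈ K, ∀ j ∈ window m t, ∀ z ∈ targets A (liftHist A g j),
    g t ≠ z ∧ ∀ g' ∈ K, G.dist z (g' t) = G.dist z (g t)

/-- The answers received by `A` before the `d`-th round of the window of `T`, for the trajectories
in `K` with move times `Q` which are unseen up to that round. -/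
noncomputable def unseenHists (T : ℕ) (K : Set (ℕ → V)) (Q : Finset ℕ) (d : ℕ) :
    Set (List (Fin 1 → ℕ)) :=
  (liftHist A · (m * T - m + d)) ''
    {g ∈ K | moveTimes G g T = Q ∧ Unseen A T g (m * T - m + d)}

theorem probeSet_subset (T : ℕ) (K : Set (ℕ → V)) :
    probeSet A T K ⊆ ⋃ Q ∈ ((Finset.range (T + 1)).powerset : Set (Finset ℕ)),
      ⋃ d ∈ Finset.range (m * T + m - (m * T - m) + 1), ⋃ L ∈ unseenHists A T K Q d,
        (targets A L : Set V) := by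
  rintro z ⟨g, hg, j, hj, hunseen, hz⟩
  obtain ⟨d, rfl⟩ := Nat.exists_eq_add_of_le hj.1
  have hd : d < m * T + m - (m * T - m) + 1 := by
    have := hj.2
    lia
  simp only [Set.mem_iUnion]
  exact ⟨moveTimes G g T, Finset.mem_powerset.2 (moveTimes_subset_range g T), d,
    Finset.mem_range.2 hd, _, ⟨g, ⟨hg, rfl, hunseen⟩, rfl⟩, hz⟩

variable {A}

theorem unseen_of_notMem_probeSet (hg : g ∈ K) (hT : g T ∉ probeSet A T K) (j : ℕ) :
    Unseen A T g j := by
  induction j using Nat.strong_induction_on with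
  | _ j ih => exact fun i hi hij hmem => hT ⟨g, hg, i, hi, ih i hij, hmem⟩

theorem targets_subset_probeSet (hg : g ∈ K) (hT : g T ∉ probeSet A T K) (hj : j ∈ window m T) :
    ↑(targets A (liftHist A g j)) ⊆ probeSet A T K :=
  fun _ hz => ⟨g, hg, j, hj, unseen_of_notMem_probeSet hg hT j, hz⟩

theorem Tracked.liftHist_eq (hG : G.Connected) (hm : 1 ≤ m) (hK : ∀ g ∈ K, ValidTraj G g)
    (hT : Tracked A T K) (hg : g ∈ K) (hg' : g' ∈ K) (hmoves : moveTimes G g' T = moveTimes G g T)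
    (hj : j ≤ m * T - m) : liftHist A g' j = liftHist A g j := by
  induction j with
  | zero => rfl
  | succ j ih =>
    have heq := ih (by lia)
    refine probeHist_succ_eq_iff.2 ⟨heq, fun i => ?_⟩
    have hlt : j / m + 1 < T := by
      have := Nat.div_lt_of_lt_mul (m := j) (n := m) (k := T - 1) (by rw [Nat.mul_sub_one]; lia)
      lia
    rw [Fin.fin_one_eq_zero i]
    refine dist_seg_congr hG hm (hK g hg _) (hK g' hg' _) ?_ (fun z hz => ?_) (Nat.mod_lt j hm)
    · rw [← mem_moveTimes (T := T) (by lia), ← mem_moveTimes (T := T) (by lia), hmoves]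
    · have hz := mem_targets_of_probe_end A hz
      have hnear := hT (j / m) (by lia) g hg j (mem_window_div hm j) z hz
      have hfar := hT (j / m + 1) hlt g hg j (mem_window_div_succ hm j) z hz
      exact ⟨hnear.1, hnear.2 g' hg', hfar.2 g' hg'⟩

theorem Tracked.notMem_targets (hm : 1 ≤ m) (hT : Tracked A T K) (hg : g ∈ K)
    (hunseen : Unseen A T g (j + 1)) (hj : j < m * T + m) :
    g (j / m) ∉ targets A (liftHist A g j) := by
  intro hmem
  have hle : j / m ≤ T := Nat.le_of_lt_succ (Nat.div_lt_of_lt_mul (by rwa [Nat.mul_succ]))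
  obtain hlt | heq := hle.lt_or_eq
  · exact (hT _ hlt g hg j (mem_window_div hm j) _ hmem).1 rfl
  · have hmem' := mem_window_div hm j
    rw [heq] at hmem hmem'
    exact hunseen j hmem' j.lt_succ_self hmem

theorem Tracked.encard_unseenHists_le (hG : G.Connected) (hm : 1 ≤ m) {δ : ℕ} (hδ : 1 ≤ δ)
    (hdist : ∀ u v, G.dist u v ≤ δ) (hK : ∀ g ∈ K, ValidTraj G g) (hT : Tracked A T K)
    (Q : Finset ℕ) {d : ℕ} (hd : m * T - m + d ≤ m * T + m) :
    (unseenHists A T K Q d).encard ≤ ((4 * δ) ^ d : ℕ) := by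
  induction d with
  | zero =>
    rw [pow_zero, Nat.cast_one, Set.encard_le_one_iff]
    rintro _ _ ⟨g, ⟨hg, hQ, -⟩, rfl⟩ ⟨g', ⟨hg', hQ', -⟩, rfl⟩
    exact (hT.liftHist_eq hG hm hK hg hg' (hQ'.trans hQ.symm) le_rfl).symm
  | succ d ih =>
    set j := m * T - m + d
    have hj : j < m * T + m := hd
    refine encard_probeHist_succ_le (fun g hg => ?_) (ih (by lia)) fun L => ?_
    · exact ⟨hg.1, hg.2.1, fun i hi hij => hg.2.2 i hi (hij.trans j.lt_succ_self)⟩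
    refine (Set.encard_le_encard ?_).trans ((Set.encard_image_le (fun d _ => d) _).trans
      (encard_dist_seg_le hG hm hδ hdist (A L 0) (Nat.mod_lt j hm) (j / m ∈ Q)))
    rintro _ ⟨g, ⟨⟨hg, hQ, hunseen⟩, rfl⟩, rfl⟩
    have hne := hT.notMem_targets hm hg hunseen hj
    have hle : j / m ≤ T := Nat.le_of_lt_succ (Nat.div_lt_of_lt_mul (by rwa [Nat.mul_succ]))
    refine ⟨_, ⟨g (j / m), g (j / m + 1), hK g hg _, ?_, fun h => ?_, fun h => ?_, rfl⟩,
      funext fun i => ?_⟩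
    · rw [← hQ, mem_moveTimes hle]
    · exact hne (mem_targets_of_probe_end A (.inl h))
    · exact hne (mem_targets_of_probe_end A (.inr h))
    · rw [Fin.fin_one_eq_zero i]
      rfl

theorem Tracked.encard_probeSet_le (hG : G.Connected) (hm : 1 ≤ m) {δ : ℕ} (hδ : 1 ≤ δ)
    (hdist : ∀ u v, G.dist u v ≤ δ) (hK : ∀ g ∈ K, ValidTraj G g) (hT : Tracked A T K) :
    (probeSet A T K).encard ≤ (16 * 2 ^ T * (16 * δ ^ 2) ^ m : ℕ) := by
  let width := m * T + m - (m * T - m)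
  have hwidth : m * T - m + width = m * T + m := by lia
  have targets_le (L : List (Fin 1 → ℕ)) : (targets A L : Set V).encard ≤ (4 : ℕ) := by
    rw [Set.encard_coe_eq_coe_finsetCard]
    exact_mod_cast Finset.card_le_four
  have hpattern (Q : Finset ℕ) : (⋃ d ∈ Finset.range (width + 1), ⋃ L ∈ unseenHists A T K Q d,
      (targets A L : Set V)).encard ≤ (2 * (4 * δ) ^ (2 * m) * 4 : ℕ) := by
    calc _ ≤ ∑ d ∈ Finset.range (width + 1),
            (⋃ L ∈ unseenHists A T K Q d, (targets A L : Set V)).encard :=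
          Finset.set_encard_biUnion_le _ _
      _ ≤ ∑ d ∈ Finset.range (width + 1), (((4 * δ) ^ d * 4 : ℕ) : ℕ∞) :=
          Finset.sum_le_sum fun d hd => encard_biUnion_le_mul
            (hT.encard_unseenHists_le hG hm hδ hdist hK Q (by rw [Finset.mem_range] at hd; lia))
            fun L _ => targets_le L
      _ ≤ (2 * (4 * δ) ^ (2 * m) * 4 : ℕ) := by
          rw [← Nat.cast_sum, ← Finset.sum_mul, Nat.cast_le]
          gcongr
          exact (sum_range_succ_pow_le (by lia) width).trans
            (Nat.mul_le_mul_left 2 (Nat.pow_le_pow_right (by lia) (by lia)))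
  refine (Set.encard_le_encard (probeSet_subset A T K)).trans
    ((encard_biUnion_le_mul (N := 2 ^ (T + 1)) ?_ fun Q _ => hpattern Q).trans_eq (congrArg _ ?_))
  · rw [Set.encard_coe_eq_coe_finsetCard, Finset.card_powerset, Finset.card_range]
  · rw [pow_mul]
    ring

end Targets

section Simulation

variable {V : Type*} {G : SimpleGraph V} {m k t T : ℕ} {B : CopStrategy V k} {g g' : ℕ → V} {z : V}

theorem ne_and_dist_eq_of_mem_range (hG : G.Connected) (hg : ValidTraj G g)
    (hfree : RSet G B g t ≠ {g t}) (hz : z ∈ Set.range (B (probeHist G B g t))) (hT : t < T)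
    (hg' : g' ∈ consistentTraj G B g T) : g' t ≠ z ∧ G.dist z (g' t) = G.dist z (g t) := by
  obtain ⟨i, rfl⟩ := hz
  have heq := dist_eq_of_mem_consistentTraj hg' hT i
  refine ⟨fun h => ?_, heq⟩
  rw [h, SimpleGraph.dist_self, eq_comm, hG.dist_eq_zero_iff] at heq
  exact hfree (RSet_eq_singleton_of_probe_eq hG hg heq)

variable [LinearOrder V] [Nonempty V] {A : CopStrategy (SubVert V G m) 1}

theorem tracked_consistentTraj (hG : G.Connected) (hg : ValidTraj G g)
    (hfree : ∀ t, RSet G B g t ≠ {g t})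
    (hcover : ∀ t < T, probeSet A t (consistentTraj G B g t) ⊆
      Set.range (B (probeHist G B g t))) :
    Tracked A T (consistentTraj G B g T) := by
  intro t ht g₁ hg₁ j hj z hz
  have of_probed (z : V) (hz : z ∈ probeSet A t (consistentTraj G B g t)) {g₂ : ℕ → V}
      (hg₂ : g₂ ∈ consistentTraj G B g T) : g₂ t ≠ z ∧ G.dist z (g₂ t) = G.dist z (g t) :=
    ne_and_dist_eq_of_mem_range hG hg (hfree t) (hcover t ht hz) ht hg₂
  have hz : z ∈ probeSet A t (consistentTraj G B g t) :=
    targets_subset_probeSet (consistentTraj_antitone ht.le hg₁)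
      (fun hmem => (of_probed _ hmem hg₁).1 rfl) hj hz
  exact ⟨(of_probed z hz hg₁).1, fun g₂ hg₂ =>
    (of_probed z hz hg₂).2.trans (of_probed z hz hg₁).2.symm⟩

theorem mem_probeSet_of_located (hm : 1 ≤ m) {K : Set (ℕ → V)} (hg : ValidTraj G g) (hgK : g ∈ K)
    {s : ℕ} (hs : RSet (Subdiv G m) A (liftTraj G m g) s = {liftTraj G m g s}) :
    g (s / m) ∈ probeSet A (s / m) K := by
  by_contra hT
  refine hT (targets_subset_probeSet hgK hT (succ_mem_window_div hm s)
    (mem_targets_of_guess_end A ?_))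
  rw [liftHist, guess_probeHist (validTraj_liftTraj hm hg) hs]
  exact eq_fstEnd_or_eq_sndEnd_seg _ _ (Nat.mod_lt s hm)

theorem localizable_of_subdiv (hG : G.Connected) (hm : 1 ≤ m) {δ : ℕ} (hδ : 1 ≤ δ)
    (hdist : ∀ u v, G.dist u v ≤ δ) {N : ℕ}
    (hA : ∀ r, ValidTraj (Subdiv G m) r → ∃ s < N, RSet (Subdiv G m) A r s = {r s}) :
    Localizable G (16 * 2 ^ (N / m) * (16 * δ ^ 2) ^ m) := by
  choose P hP using fun t (K : Set (ℕ → V)) =>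
    exists_subset_range_of_encard_le (probeSet A t K) (16 * 2 ^ (N / m) * (16 * δ ^ 2) ^ m)
  obtain ⟨B, hB⟩ := exists_strategy_of_rule G P
  refine ⟨B, fun g hg => by_contra fun hfree => ?_⟩
  rw [not_exists] at hfree
  have hcover (T : ℕ) (hT : T ≤ N / m) :
      probeSet A T (consistentTraj G B g T) ⊆ Set.range (B (probeHist G B g T)) := by
    induction T using Nat.strong_induction_on with
    | _ T ih =>
      have htracked : Tracked A T (consistentTraj G B g T) :=
        tracked_consistentTraj hG hg hfree fun t ht => ih t ht (ht.le.trans hT)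
      rw [hB]
      refine hP _ _ ((htracked.encard_probeSet_le hG hm hδ hdist fun _ h => h.1).trans ?_)
      gcongr
      exact one_le_two
  obtain ⟨s, hs, hlocated⟩ := hA _ (validTraj_liftTraj hm hg)
  have hprobed := hcover _ (Nat.div_le_div_right hs.le)
    (mem_probeSet_of_located hm hg (self_mem_consistentTraj hg) hlocated)
  exact (ne_and_dist_eq_of_mem_range hG hg (hfree _) hprobed (Nat.lt_succ_self _)
    (self_mem_consistentTraj hg)).1 rfl

theorem locNum_le_mul [Finite V] [Nontrivial V] (hG : G.Connected) :
    locNum G ≤ 16 * 2 ^ (captTime (Subdiv G (subdivNum G)) 1 / subdivNum G) *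
      (16 * G.diam ^ 2) ^ subdivNum G := by
  obtain ⟨hm, hloc⟩ := subdivNum_spec hG
  obtain ⟨A, hA⟩ := hloc.captTime_spec
  exact Nat.sInf_le (localizable_of_subdiv hG hm
    (Nat.one_le_iff_ne_zero.2 (connected_iff_diam_ne_zero.1 hG))
    (fun _ _ => dist_le_diam (connected_iff_ediam_ne_top.1 hG)) hA)

end Simulation

theorem locNum_le_const_mul_general {V : Type*} [LinearOrder V] [Finite V] [Nontrivial V]
    {G : SimpleGraph V} (hG : G.Connected) :
    (locNum G : ℝ) ≤ 16 *
      (2 : ℝ) ^ ((captTime (Subdiv G (subdivNum G)) 1 : ℝ) / (subdivNum G : ℝ)) *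
      (16 : ℝ) ^ (subdivNum G) * (G.diam : ℝ) ^ (2 * subdivNum G) := by
  set η := subdivNum G
  set capt := captTime (Subdiv G η) 1
  have hpow : (2 : ℝ) ^ (capt / η) ≤ (2 : ℝ) ^ ((capt : ℝ) / η) := by
    rw [← Real.rpow_natCast]
    exact Real.rpow_le_rpow_of_exponent_le one_le_two Nat.cast_div_le
  calc (locNum G : ℝ) ≤ 16 * 2 ^ (capt / η) * (16 * (G.diam : ℝ) ^ 2) ^ η := by
        exact_mod_cast locNum_le_mul hG
    _ = 16 * 2 ^ (capt / η) * 16 ^ η * (G.diam : ℝ) ^ (2 * η) := by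
        rw [mul_pow, ← pow_mul, mul_assoc _ ((16 : ℝ) ^ η)]
    _ ≤ 16 * (2 : ℝ) ^ ((capt : ℝ) / η) * 16 ^ η * (G.diam : ℝ) ^ (2 * η) := by gcongr

/-- There is an absolute constant `C > 0` such that for every finite connected
graph `G` with at least two vertices, writing `η = η(G)`, `δ = diam(G)` and
`capt` for the capture time of the one-cop game on `G^{1/η}`, one has
`ζ(G) ≤ C · 2^(capt/η) · 16^η · δ^(2η)`. -/
theorem locNum_le_const_mul :
    ∃ C : ℝ, 0 < C ∧ ∀ (n : ℕ) (G : SimpleGraph (Fin n)),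
      G.Connected → 2 ≤ n →
      (locNum G : ℝ) ≤ C *
        (2 : ℝ) ^ ((captTime (Subdiv G (subdivNum G)) 1 : ℝ) / (subdivNum G : ℝ)) *
        (16 : ℝ) ^ (subdivNum G) * (G.diam : ℝ) ^ (2 * subdivNum G) :=
  ⟨16, by norm_num, fun _ _ hG hn =>
    have := Fin.nontrivial_iff_two_le.2 hn
    locNum_le_const_mul_general hG⟩
end

section
/- Let G be a finite simple connected graph, m ≥ 2 an integer, q ∈ V(G), and {w1, w2} an edge of G. Let p = q^{1/m}, and let v be the vertex of G^{1/m} on the thread replacing {w1, w2} at distance x from w1^{1/m}, where 0 < x < m/2. If dist_{G^{1/m}}(p, v) mod m < m/2, then ⌊dist_{G^{1/m}}(p, v) / m⌋ = dist_G(q, w1). -/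
open SimpleGraph

/-!
In `G^{1/m}` the distance from the branch vertex of `q` to the vertex at position `x` on the thread
of `{u, v}` is `min (m * d(q, u) + x) (m * d(q, v) + (m - x))`, with `d` the distance of `G`.
The two terms are lengths of walks, and the right-hand side changes by at most one along every edge
of the subdivision, so no walk is shorter. If the second term were the smaller one for some
`0 < x < m / 2`, the distance would be `m - x > m / 2` modulo `m`. Otherwise it is
`m * d(q, u) + x`, whose quotient by `m` is `d(q, u)`.
-/

section LipschitzPotential

variable {α : Type*} {H : SimpleGraph α} {f : α → ℕ}

lemma apply_le_add_length (hf : ∀ ⦃a b⦄, H.Adj a b → f b ≤ f a + 1) {a b : α} (p : H.Walk a b) :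
    f b ≤ f a + p.length := by
  induction p with
  | nil => simp
  | cons h p ih =>
    have := hf h
    rw [Walk.length_cons]
    omega

lemma apply_le_add_dist (hf : ∀ ⦃a b⦄, H.Adj a b → f b ≤ f a + 1) {a b : α}
    (hab : H.Reachable a b) : f b ≤ f a + H.dist a b := by
  obtain ⟨p, hp⟩ := hab.exists_walk_length_eq_dist
  exact hp ▸ apply_le_add_length hf p

lemma dist_le_dist_add_one_of_adj {a b : α} (h : H.Adj a b) (c : α) :
    H.dist c b ≤ H.dist c a + 1 := by
  have := h.diff_dist_adj (u := c)
  omega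

lemma mul_dist_le_of_adj {a b : α} (h : H.Adj a b) (c : α) (k : ℕ) :
    k * H.dist c b ≤ k * H.dist c a + k :=
  Nat.mul_le_mul_left k (dist_le_dist_add_one_of_adj h c)

end LipschitzPotential

namespace Subdiv

variable {V : Type*} [LinearOrder V] {G : SimpleGraph V} {m x : ℕ} {q u v : V}
  {a b : SubVert V G m}

lemma threadVert_zero (h : G.Adj u v) : threadVert G m u v h 0 = Sum.inl u := by
  simp [threadVert]

lemma threadVert_self (h : G.Adj u v) (hm : m ≠ 0) : threadVert G m u v h m = Sum.inl v := by
  simp [threadVert, hm]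

lemma threadVert_succ_of_lt (h : G.Adj u v) (huv : u < v) (hx : x < m - 1) :
    threadVert G m u v h (x + 1) = Sum.inr (⟨(u, v), h, huv⟩, ⟨x, hx⟩) := by
  have hxm : ¬ m ≤ x + 1 := by omega
  simp [threadVert, hxm, huv]

lemma threadVert_symm (h : G.Adj u v) (hx : x ≤ m) (hm : m ≠ 0) :
    threadVert G m v u h.symm (m - x) = threadVert G m u v h x := by
  obtain rfl | hx0 := Nat.eq_zero_or_pos x
  · rw [Nat.sub_zero, threadVert_self _ hm, threadVert_zero]
  obtain rfl | hxm := hx.eq_or_lt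
  · rw [Nat.sub_self, threadVert_self _ hm, threadVert_zero]
  have hmx0 : m - x ≠ 0 := by omega
  have hmxm : ¬ m ≤ m - x := by omega
  have hmx : m - (m - x) - 1 = x - 1 := by omega
  obtain huv | hvu := h.ne.lt_or_gt
  · simp [threadVert, huv, huv.not_gt, hmx, hmx0, hmxm, hx0.ne', hxm.not_ge]
  · simp [threadVert, hvu, hvu.not_gt, hmx0, hmxm, hx0.ne', hxm.not_ge]

lemma adj_threadVert_succ (h : G.Adj u v) (hx : x < m) :
    (Subdiv G m).Adj (threadVert G m u v h x) (threadVert G m u v h (x + 1)) := by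
  wlog huv : u < v generalizing u v x
  · have hvu := this h.symm (x := m - (x + 1)) (by omega) (h.ne.lt_or_gt.resolve_left huv)
    rw [show m - (x + 1) + 1 = m - x by omega, threadVert_symm h hx (by omega),
      threadVert_symm h hx.le (by omega)] at hvu
    exact hvu.symm
  rw [Subdiv, fromRel_adj]
  obtain rfl | hxm := (Nat.succ_le_of_lt hx).eq_or_lt
  · rw [threadVert_self h x.succ_ne_zero]
    cases x with
    | zero => simp [threadVert_zero, subPre, h, h.ne]
    | succ y => simp [threadVert_succ_of_lt h huv, subPre]
  · rw [threadVert_succ_of_lt h huv (by omega)]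
    cases x with
    | zero => simp [threadVert_zero, subPre]
    | succ y => simp [threadVert_succ_of_lt h huv (show y < m - 1 by omega), subPre]

lemma exists_threadVert_of_subPre (hab : subPre G m a b) :
    ∃ (u v : V) (h : G.Adj u v) (x : ℕ), x < m ∧
      a = threadVert G m u v h x ∧ b = threadVert G m u v h (x + 1) := by
  rcases a with u | ⟨⟨⟨u, v⟩, h, huv⟩, i, hi⟩ <;>
    rcases b with w | ⟨⟨⟨w, z⟩, hwz, hlt⟩, j, hj⟩
  · obtain ⟨rfl, h⟩ := hab
    exact ⟨u, w, h, 0, one_pos, (threadVert_zero h).symm, (threadVert_self h one_ne_zero).symm⟩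
  · obtain ⟨rfl, rfl⟩ | ⟨rfl, hjm⟩ : (u = w ∧ j = 0) ∨ (u = z ∧ j + 2 = m) := hab
    · exact ⟨u, z, hwz, 0, by omega, (threadVert_zero hwz).symm,
        (threadVert_succ_of_lt hwz hlt hj).symm⟩
    · refine ⟨u, w, hwz.symm, 0, by omega, (threadVert_zero hwz.symm).symm, ?_⟩
      rw [← threadVert_succ_of_lt hwz hlt, ← threadVert_symm hwz (by omega) (by omega),
        show m - (j + 1) = 0 + 1 by omega]
  · exact hab.elim
  · obtain ⟨he, rfl : i + 1 = j⟩ := hab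
    obtain ⟨rfl, rfl⟩ : u = w ∧ v = z := by simpa using he
    exact ⟨u, v, h, i + 1, by omega, (threadVert_succ_of_lt h huv hi).symm,
      (threadVert_succ_of_lt h huv hj).symm⟩

lemma exists_threadVert_of_adj (hab : (Subdiv G m).Adj a b) :
    ∃ (u v : V) (h : G.Adj u v) (x : ℕ), x < m ∧
      a = threadVert G m u v h x ∧ b = threadVert G m u v h (x + 1) := by
  obtain ⟨-, hab | hba⟩ := hab
  · exact exists_threadVert_of_subPre hab
  · obtain ⟨u, v, h, x, hx, rfl, rfl⟩ := exists_threadVert_of_subPre hba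
    refine ⟨v, u, h.symm, m - (x + 1), by omega, (threadVert_symm h hx (by omega)).symm, ?_⟩
    rw [show m - (x + 1) + 1 = m - x by omega, threadVert_symm h hx.le (by omega)]

lemma exists_walk_threadVert (h : G.Adj u v) (hx : x ≤ m) :
    ∃ p : (Subdiv G m).Walk (Sum.inl u) (threadVert G m u v h x), p.length = x := by
  induction x with
  | zero => exact threadVert_zero (m := m) h ▸ ⟨.nil, rfl⟩
  | succ x ih =>
    obtain ⟨p, hp⟩ := ih (by omega)
    exact ⟨p.concat (adj_threadVert_succ h hx), by rw [Walk.length_concat, hp]⟩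

lemma exists_walk_length_eq_mul (hm : m ≠ 0) (p : G.Walk u v) :
    ∃ p' : (Subdiv G m).Walk (Sum.inl u) (Sum.inl v), p'.length = m * p.length := by
  induction p with
  | nil => exact ⟨.nil, rfl⟩
  | cons h p ih =>
    obtain ⟨p', hp'⟩ := ih
    obtain ⟨t, ht⟩ := threadVert_self h hm ▸ exists_walk_threadVert h le_rfl
    exact ⟨t.append p', by rw [Walk.length_append, ht, hp', Walk.length_cons]; ring⟩

lemma exists_walk_inl_threadVert (hq : G.Reachable q u) (h : G.Adj u v) (hx : x ≤ m)
    (hm : m ≠ 0) : ∃ p : (Subdiv G m).Walk (Sum.inl q) (threadVert G m u v h x),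
      p.length = m * G.dist q u + x := by
  obtain ⟨r, hr⟩ := hq.exists_walk_length_eq_dist
  obtain ⟨p, hp⟩ := exists_walk_length_eq_mul hm r
  obtain ⟨t, ht⟩ := exists_walk_threadVert h hx
  exact ⟨p.append t, by rw [Walk.length_append, hp, ht, hr]⟩

lemma dist_inl_threadVert_le (hq : G.Reachable q u) (h : G.Adj u v) (hx : x ≤ m) (hm : m ≠ 0) :
    (Subdiv G m).dist (Sum.inl q) (threadVert G m u v h x) ≤ m * G.dist q u + x := by
  obtain ⟨p, hp⟩ := exists_walk_inl_threadVert hq h hx hm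
  exact hp ▸ dist_le p

/-- The candidate for the distance from the branch vertex of `q` in `G^{1/m}`: an internal vertex is
reached through the cheaper of the two ends of its thread. It grows by at most one along every edge
and therefore bounds the distance from below. -/
noncomputable def branchPotential (G : SimpleGraph V) (m : ℕ) (q : V) : SubVert V G m → ℕ
  | Sum.inl u => m * G.dist q u
  | Sum.inr (e, i) =>
    min (m * G.dist q e.1.1 + (i + 1)) (m * G.dist q e.1.2 + (m - (i + 1)))

lemma branchPotential_threadVert (h : G.Adj u v) (hx : x ≤ m) :
    branchPotential G m q (threadVert G m u v h x) =
      min (m * G.dist q u + x) (m * G.dist q v + (m - x)) := by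
  have huv := mul_dist_le_of_adj h q m
  have hvu := mul_dist_le_of_adj h.symm q m
  unfold threadVert
  split_ifs <;> simp only [branchPotential] <;> omega

lemma branchPotential_le_add_one_of_adj (hab : (Subdiv G m).Adj a b) :
    branchPotential G m q b ≤ branchPotential G m q a + 1 := by
  obtain ⟨u, v, h, x, hx, rfl, rfl⟩ := exists_threadVert_of_adj hab
  rw [branchPotential_threadVert h hx, branchPotential_threadVert h hx.le]
  omega

theorem dist_inl_threadVert (hq : G.Reachable q u) (h : G.Adj u v) (hx : x ≤ m) (hm : m ≠ 0) :
    (Subdiv G m).dist (Sum.inl q) (threadVert G m u v h x) =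
      min (m * G.dist q u + x) (m * G.dist q v + (m - x)) := by
  refine le_antisymm (le_min (dist_inl_threadVert_le hq h hx hm) ?_) ?_
  · rw [← threadVert_symm h hx hm]
    exact dist_inl_threadVert_le (hq.trans h.reachable) h.symm (Nat.sub_le m x) hm
  · obtain ⟨p, -⟩ := exists_walk_inl_threadVert hq h hx hm
    calc
      min (m * G.dist q u + x) (m * G.dist q v + (m - x))
      _ = branchPotential G m q (threadVert G m u v h x) := (branchPotential_threadVert h hx).symm
      _ ≤ branchPotential G m q (Sum.inl q) +
          (Subdiv G m).dist (Sum.inl q) (threadVert G m u v h x) :=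
        apply_le_add_dist (fun _ _ ↦ branchPotential_le_add_one_of_adj) p.reachable
      _ = (Subdiv G m).dist (Sum.inl q) (threadVert G m u v h x) := by simp [branchPotential]

end Subdiv

theorem subdiv_dist_div_of_mod_lt_general {V : Type*} [LinearOrder V] (G : SimpleGraph V) {m : ℕ}
    {q w₁ w₂ : V} (hq : G.Reachable q w₁) (hw : G.Adj w₁ w₂) {x : ℕ} (hxm : 2 * x < m)
    (hmod : 2 * ((Subdiv G m).dist (Sum.inl q) (threadVert G m w₁ w₂ hw x) % m) < m) :
    (Subdiv G m).dist (Sum.inl q) (threadVert G m w₁ w₂ hw x) / m = G.dist q w₁ := by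
  have hm : 0 < m := by omega
  rw [Subdiv.dist_inl_threadVert hq hw (by omega) hm.ne'] at hmod ⊢
  obtain hle | hlt := le_or_gt (m * G.dist q w₁ + x) (m * G.dist q w₂ + (m - x))
  · rw [min_eq_left hle, Nat.mul_add_div hm, Nat.div_eq_of_lt (by omega), add_zero]
  · have hx0 : 0 < x := by
      have := mul_dist_le_of_adj hw.symm q m
      omega
    rw [min_eq_right hlt.le, Nat.mul_add_mod, Nat.mod_eq_of_lt (by omega)] at hmod
    omega

/-- For `p = q^{1/m}` and `v` at distance `x` from `w₁` along the thread of the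
edge `{w₁, w₂}` with `0 < x < m/2`: if `dist(p,v) mod m < m/2`, then
`⌊dist(p,v) / m⌋ = dist_G(q, w₁)`. -/
theorem subdiv_dist_div_of_mod_lt {n m : ℕ} (G : SimpleGraph (Fin n))
    (hG : G.Connected) (hm : 2 ≤ m) (q w₁ w₂ : Fin n) (hw : G.Adj w₁ w₂)
    (x : ℕ) (hx0 : 0 < x) (hxm : 2 * x < m)
    (hmod : 2 * ((Subdiv G m).dist (Sum.inl q) (threadVert G m w₁ w₂ hw x) % m) < m) :
    (Subdiv G m).dist (Sum.inl q) (threadVert G m w₁ w₂ hw x) / m = G.dist q w₁ :=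
  subdiv_dist_div_of_mod_lt_general G (hG.preconnected q w₁) hw hxm hmod
end

section
/- Let G be a finite simple connected graph, m ≥ 2 an integer, and let {w1, w2} and {a, b} be two distinct edges of G. Let v be the vertex on the thread of G^{1/m} replacing {w1, w2} at distance j from w1^{1/m} with 0 < j < m, and let p be the vertex on the thread replacing {a, b} at distance y from a^{1/m} with 0 < y < m. Then dist_{G^{1/m}}(v, p) = min( j + y + m·dist_G(w1, a), j + (m − y) + m·dist_G(w1, b), (m − j) + y + m·dist_G(w2, a), (m − j) + (m − y) + m·dist_G(w2, b) ). -/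
open SimpleGraph

/-!
The internal vertices of a thread have degree two, so a walk leaving the thread has to pass through
one of its ends. Hence the distance from a point of the thread to any vertex which is not one of
its internal vertices is the smaller of the two distances through the ends. Applied to the first
step of a walk between branch vertices, this also turns such a walk into a walk of `G` which is
`m` times shorter, so distances between branch vertices are `m` times those of `G`. Two distinct
threads have no internal vertex in common, so the formula can be used at both endpoints.
-/

section ThreadVertices

variable {V : Type*} [LinearOrder V] {G : SimpleGraph V} {m x y : ℕ} {w₁ w₂ a b : V}

theorem threadVert_zero_s14 (h : G.Adj w₁ w₂) : threadVert G m w₁ w₂ h 0 = Sum.inl w₁ := by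
  simp [threadVert]

theorem threadVert_self (hm : 0 < m) (h : G.Adj w₁ w₂) :
    threadVert G m w₁ w₂ h m = Sum.inl w₂ := by
  simp [threadVert, hm.ne']

theorem threadVert_succ_s14 (h : G.Adj w₁ w₂) (hlt : w₁ < w₂) (hx : x + 1 < m) :
    threadVert G m w₁ w₂ h (x + 1) = Sum.inr (⟨(w₁, w₂), h, hlt⟩, ⟨x, by omega⟩) := by
  simp [threadVert, hx.not_ge, hlt]

theorem threadVert_symm (hm : 0 < m) (h : G.Adj w₁ w₂) (hxy : x + y = m) :
    threadVert G m w₂ w₁ h.symm y = threadVert G m w₁ w₂ h x := by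
  wlog hlt : w₁ < w₂ generalizing w₁ w₂ x y
  · exact (this h.symm (by omega) (h.ne.lt_or_gt.resolve_left hlt)).symm
  rcases x with _ | x
  · obtain rfl : y = m := by omega
    rw [threadVert_self hm, threadVert_zero_s14]
  obtain rfl | hy0 := Nat.eq_zero_or_pos y
  · obtain rfl : m = x + 1 := by omega
    rw [threadVert_zero_s14, threadVert_self hm]
  have hym : ¬ m ≤ y := by omega
  have hidx : m - y - 1 = x := by omega
  rw [threadVert_succ_s14 h hlt (by omega)]
  simp [threadVert, hy0.ne', hym, hlt.not_gt, hidx]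

theorem threadVert_ne_inl (h : G.Adj w₁ w₂) (hx0 : 0 < x) (hxm : x < m) (u : V) :
    threadVert G m w₁ w₂ h x ≠ Sum.inl u := by
  unfold threadVert
  split_ifs <;> first | omega | exact Sum.inr_ne_inl

theorem sym2_eq_of_threadVert_eq_inr (h : G.Adj w₁ w₂)
    {e : {e : V × V // G.Adj e.1 e.2 ∧ e.1 < e.2}} {i : Fin (m - 1)}
    (he : threadVert G m w₁ w₂ h x = Sum.inr (e, i)) : s(e.1.1, e.1.2) = s(w₁, w₂) := by
  unfold threadVert at he
  split_ifs at he <;> obtain ⟨rfl, -⟩ := Prod.mk.inj (Sum.inr.inj he)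
  · rfl
  · exact Sym2.eq_swap

theorem threadVert_ne_threadVert (hw : G.Adj w₁ w₂) (hab : G.Adj a b)
    (hne : s(w₁, w₂) ≠ s(a, b)) (hx0 : 0 < x) (hxm : x < m) (y : ℕ) :
    threadVert G m w₁ w₂ hw x ≠ threadVert G m a b hab y := by
  rcases hp : threadVert G m a b hab y with u | ⟨e, i⟩
  · exact threadVert_ne_inl hw hx0 hxm u
  · intro hv
    exact hne ((sym2_eq_of_threadVert_eq_inr hw hv).symm.trans
      (sym2_eq_of_threadVert_eq_inr hab hp))

end ThreadVertices

section Adjacency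

variable {V : Type*} [LinearOrder V] {G : SimpleGraph V} {m x : ℕ} {u w₁ w₂ : V}

theorem subdiv_adj_threadVert_succ (h : G.Adj w₁ w₂) (hx : x < m) :
    (Subdiv G m).Adj (threadVert G m w₁ w₂ h x) (threadVert G m w₁ w₂ h (x + 1)) := by
  wlog hlt : w₁ < w₂ generalizing w₁ w₂ x
  · have hadj := this h.symm (x := m - (x + 1)) (by omega) (h.ne.lt_or_gt.resolve_left hlt)
    rw [threadVert_symm (x := x + 1) (by omega) h (by omega),
      threadVert_symm (x := x) (by omega) h (by omega)] at hadj
    exact hadj.symm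
  rw [Subdiv, fromRel_adj]
  obtain rfl | hxm := (show x + 1 ≤ m from hx).eq_or_lt <;> rcases x with _ | x
  · rw [threadVert_zero_s14, threadVert_self (Nat.succ_pos 0)]
    exact ⟨by simpa using h.ne, .inl ⟨rfl, h⟩⟩
  · rw [threadVert_self x.succ.succ_pos, threadVert_succ_s14 h hlt hx]
    exact ⟨Sum.inr_ne_inl, .inr (.inr ⟨rfl, rfl⟩)⟩
  · rw [threadVert_zero_s14, threadVert_succ_s14 h hlt hxm]
    exact ⟨Sum.inl_ne_inr, .inl (.inl ⟨rfl, rfl⟩)⟩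
  · rw [threadVert_succ_s14 h hlt hx, threadVert_succ_s14 h hlt hxm]
    exact ⟨by simp, .inl ⟨rfl, rfl⟩⟩

theorem eq_threadVert_of_subdiv_adj_threadVert (h : G.Adj w₁ w₂) (hx : x + 1 < m)
    {t : SubVert V G m} (ht : (Subdiv G m).Adj (threadVert G m w₁ w₂ h (x + 1)) t) :
    t = threadVert G m w₁ w₂ h x ∨ t = threadVert G m w₁ w₂ h (x + 2) := by
  wlog hlt : w₁ < w₂ generalizing w₁ w₂ x
  · obtain ⟨y, rfl⟩ := Nat.exists_eq_add_of_le (show x + 2 ≤ m from hx)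
    have hm : 0 < x + 2 + y := by omega
    rw [← threadVert_symm (y := y + 1) hm h (by omega)] at ht
    rw [← threadVert_symm (y := y + 2) hm h (by omega), ← threadVert_symm (y := y) hm h rfl]
    exact (this h.symm (by omega) ht (h.ne.lt_or_gt.resolve_left hlt)).symm
  rw [threadVert_succ_s14 h hlt hx, Subdiv, fromRel_adj] at ht
  rcases t with u | ⟨⟨⟨c, d⟩, h', hlt'⟩, i, hi⟩
  · simp only [subPre, false_or] at ht
    obtain ⟨-, ⟨rfl, rfl⟩ | ⟨rfl, rfl⟩⟩ := ht
    · exact .inl (threadVert_zero_s14 h).symm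
    · exact .inr (threadVert_self (by omega) h).symm
  · simp only [subPre, Subtype.mk.injEq, Prod.mk.injEq] at ht
    obtain ⟨-, ⟨⟨rfl, rfl⟩, rfl⟩ | ⟨⟨rfl, rfl⟩, rfl⟩⟩ := ht
    · exact .inr (threadVert_succ_s14 h hlt (by omega)).symm
    · exact .inl (threadVert_succ_s14 h hlt (by omega)).symm

theorem exists_eq_threadVert_one_of_subdiv_adj_inl {t : SubVert V G m}
    (ht : (Subdiv G m).Adj (Sum.inl u) t) :
    ∃ (v : V) (h : G.Adj u v), t = threadVert G m u v h 1 := by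
  rw [Subdiv, fromRel_adj] at ht
  rcases t with v | ⟨⟨⟨c, d⟩, h, hlt⟩, i, hi⟩
  · simp only [subPre] at ht
    obtain ⟨-, ⟨rfl, h⟩ | ⟨rfl, h⟩⟩ := ht
    · exact ⟨v, h, (threadVert_self one_pos h).symm⟩
    · exact ⟨v, h.symm, (threadVert_self one_pos h.symm).symm⟩
  · simp only [subPre, or_false] at ht
    obtain ⟨-, ⟨rfl, rfl⟩ | ⟨rfl, rfl⟩⟩ := ht
    · exact ⟨d, h, (threadVert_succ_s14 h hlt (by omega)).symm⟩
    · exact ⟨c, h.symm, ((threadVert_symm (by omega) h (by omega)).trans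
        (threadVert_succ_s14 h hlt (by omega))).symm⟩

end Adjacency

section Distance

variable {V : Type*} [LinearOrder V] {G : SimpleGraph V} {m x y : ℕ} {w₁ w₂ a b : V}

theorem exists_walk_inl_of_walk_threadVert (h : G.Adj w₁ w₂) (hx : x ≤ m) {s : SubVert V G m}
    (hs : ∀ i, 0 < i → i < m → threadVert G m w₁ w₂ h i ≠ s)
    (p : (Subdiv G m).Walk (threadVert G m w₁ w₂ h x) s) :
    (∃ q : (Subdiv G m).Walk (Sum.inl w₁) s, x + q.length ≤ p.length) ∨
      ∃ q : (Subdiv G m).Walk (Sum.inl w₂) s, m - x + q.length ≤ p.length := by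
  induction hn : p.length using Nat.strong_induction_on generalizing x p with
  | _ n ih =>
    obtain rfl | hx0 := Nat.eq_zero_or_pos x
    · exact .inl ⟨p.copy (threadVert_zero_s14 h) rfl, by simp [hn]⟩
    obtain rfl | hxm := hx.eq_or_lt
    · exact .inr ⟨p.copy (threadVert_self hx0 h) rfl, by simp [hn]⟩
    obtain ⟨x, rfl⟩ := Nat.exists_eq_succ_of_ne_zero hx0.ne'
    cases p with
    | nil => exact absurd rfl (hs _ hx0 hxm)
    | cons hadj p =>
      rw [Walk.length_cons] at hn
      obtain rfl | rfl := eq_threadVert_of_subdiv_adj_threadVert h hxm hadj <;>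
        exact (ih p.length (by omega) (by omega) p rfl).imp
          (fun ⟨q, hq⟩ ↦ ⟨q, by omega⟩) (fun ⟨q, hq⟩ ↦ ⟨q, by omega⟩)

theorem exists_walk_of_subdiv_walk_inl (hm : 0 < m) {u v : V}
    (p : (Subdiv G m).Walk (Sum.inl u) (Sum.inl v)) :
    ∃ q : G.Walk u v, m * q.length ≤ p.length := by
  induction hn : p.length using Nat.strong_induction_on generalizing u p with
  | _ n ih =>
    cases p with
    | nil => exact ⟨.nil, by simp⟩
    | cons hadj p =>
      rw [Walk.length_cons] at hn
      obtain ⟨u', h, rfl⟩ := exists_eq_threadVert_one_of_subdiv_adj_inl hadj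
      obtain ⟨q, hq⟩ | ⟨q, hq⟩ := exists_walk_inl_of_walk_threadVert h hm
        (fun i hi0 him ↦ threadVert_ne_inl h hi0 him v) p
      · obtain ⟨r, hr⟩ := ih q.length (by omega) q rfl
        exact ⟨r, by omega⟩
      · obtain ⟨r, hr⟩ := ih q.length (by omega) q rfl
        exact ⟨.cons h r, by rw [Walk.length_cons, Nat.mul_succ]; omega⟩

theorem subdiv_edist_threadVert_inl_left_le (h : G.Adj w₁ w₂) (hx : x ≤ m) :
    (Subdiv G m).edist (threadVert G m w₁ w₂ h x) (Sum.inl w₁) ≤ x := by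
  induction x with
  | zero => simp [threadVert_zero_s14]
  | succ x ih =>
    have hadj := edist_eq_one_iff_adj.mpr (subdiv_adj_threadVert_succ h hx).symm
    calc
      _ ≤ _ := SimpleGraph.edist_triangle (v := threadVert G m w₁ w₂ h x)
      _ ≤ 1 + (x : ℕ∞) := add_le_add hadj.le (ih (by omega))
      _ = (x + 1 : ℕ) := by rw [add_comm, Nat.cast_succ]

theorem subdiv_edist_threadVert_inl_right_le (hm : 0 < m) (h : G.Adj w₁ w₂) (hx : x ≤ m) :
    (Subdiv G m).edist (threadVert G m w₁ w₂ h x) (Sum.inl w₂) ≤ (m - x : ℕ) := by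
  rw [← threadVert_symm hm h (Nat.add_sub_of_le hx)]
  exact subdiv_edist_threadVert_inl_left_le h.symm (Nat.sub_le m x)

theorem subdiv_edist_threadVert (hm : 0 < m) (h : G.Adj w₁ w₂) (hx : x ≤ m) {s : SubVert V G m}
    (hs : ∀ i, 0 < i → i < m → threadVert G m w₁ w₂ h i ≠ s) :
    (Subdiv G m).edist (threadVert G m w₁ w₂ h x) s =
      min (x + (Subdiv G m).edist (Sum.inl w₁) s)
        ((m - x : ℕ) + (Subdiv G m).edist (Sum.inl w₂) s) := by
  refine le_antisymm (le_min ?_ ?_) (le_iInf fun p ↦ min_le_iff.mpr ?_)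
  · exact SimpleGraph.edist_triangle.trans
      (add_le_add_left (subdiv_edist_threadVert_inl_left_le h hx) _)
  · exact SimpleGraph.edist_triangle.trans
      (add_le_add_left (subdiv_edist_threadVert_inl_right_le hm h hx) _)
  · refine (exists_walk_inl_of_walk_threadVert h hx hs p).imp ?_ ?_ <;>
      exact fun ⟨q, hq⟩ ↦ (add_le_add_right (edist_le q) _).trans (mod_cast hq)

theorem subdiv_edist_inl_le_mul_length (hm : 0 < m) {u v : V} (q : G.Walk u v) :
    (Subdiv G m).edist (Sum.inl u) (Sum.inl v) ≤ (m * q.length : ℕ) := by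
  induction q with
  | nil => simp
  | @cons u u' v h q ih =>
    have hedge : (Subdiv G m).edist (Sum.inl u) (Sum.inl u') ≤ m := by
      simpa [threadVert_zero_s14] using subdiv_edist_threadVert_inl_right_le hm h m.zero_le
    calc
      _ ≤ _ := SimpleGraph.edist_triangle (v := Sum.inl u')
      _ ≤ (m : ℕ∞) + (m * q.length : ℕ) := add_le_add hedge ih
      _ = (m * (q.length + 1) : ℕ) := by push_cast; ring

theorem subdiv_edist_inl (hm : 0 < m) (u v : V) :
    (Subdiv G m).edist (Sum.inl u) (Sum.inl v) = m * G.edist u v := by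
  apply le_antisymm
  · by_cases huv : G.edist u v = ⊤
    · simp [huv, ENat.mul_top, hm.ne']
    · obtain ⟨q, hq⟩ := exists_walk_of_edist_ne_top huv
      rw [← hq]
      exact_mod_cast subdiv_edist_inl_le_mul_length hm q
  · refine le_iInf fun p ↦ ?_
    obtain ⟨q, hq⟩ := exists_walk_of_subdiv_walk_inl hm p
    exact (mul_le_mul_right (edist_le q) _).trans (mod_cast hq)

theorem subdiv_edist_inl_threadVert (hm : 0 < m) (u : V) (h : G.Adj a b) (hy : y ≤ m) :
    (Subdiv G m).edist (Sum.inl u) (threadVert G m a b h y) =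
      min (y + m * G.edist u a) ((m - y : ℕ) + m * G.edist u b) := by
  rw [SimpleGraph.edist_comm, subdiv_edist_threadVert hm h hy
    (fun _ hi0 him ↦ threadVert_ne_inl h hi0 him u), subdiv_edist_inl hm, subdiv_edist_inl hm,
    SimpleGraph.edist_comm (u := a), SimpleGraph.edist_comm (u := b)]

end Distance

theorem subdiv_dist_thread_thread_general {V : Type*} [LinearOrder V] {G : SimpleGraph V}
    {m j y : ℕ} {w₁ w₂ a b : V} (hm : 0 < m) (hw : G.Adj w₁ w₂) (hab : G.Adj a b)
    (hne : s(w₁, w₂) ≠ s(a, b)) (hj : j ≤ m) (hy : y ≤ m) :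
    (Subdiv G m).edist (threadVert G m w₁ w₂ hw j) (threadVert G m a b hab y) =
      min (min (j + y + m * G.edist w₁ a) (j + (m - y : ℕ) + m * G.edist w₁ b))
        (min ((m - j : ℕ) + y + m * G.edist w₂ a)
          ((m - j : ℕ) + (m - y : ℕ) + m * G.edist w₂ b)) := by
  rw [subdiv_edist_threadVert hm hw hj
      (fun _ hi0 him ↦ threadVert_ne_threadVert hw hab hne hi0 him y),
    subdiv_edist_inl_threadVert hm w₁ hab hy, subdiv_edist_inl_threadVert hm w₂ hab hy]
  simp only [add_assoc, ← min_add_add_left]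

/-- Distance between internal vertices of two distinct threads: for `v` at
distance `j` from `w₁` on the thread of `{w₁, w₂}` and `p` at distance `y`
from `a` on the thread of `{a, b}` (with `0 < j < m`, `0 < y < m`),
`dist(v, p)` is the minimum of the four branch-to-branch routes. -/
theorem subdiv_dist_thread_thread {n m : ℕ} (G : SimpleGraph (Fin n))
    (hG : G.Connected) (hm : 2 ≤ m) (w₁ w₂ a b : Fin n)
    (hw : G.Adj w₁ w₂) (hab : G.Adj a b) (hne : s(w₁, w₂) ≠ s(a, b))
    (j y : ℕ) (hj0 : 0 < j) (hjm : j < m) (hy0 : 0 < y) (hym : y < m) :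
    (Subdiv G m).dist (threadVert G m w₁ w₂ hw j) (threadVert G m a b hab y) =
      min (min (j + y + m * G.dist w₁ a) (j + (m - y) + m * G.dist w₁ b))
          (min ((m - j) + y + m * G.dist w₂ a) ((m - j) + (m - y) + m * G.dist w₂ b)) := by
  rw [SimpleGraph.dist, subdiv_dist_thread_thread_general (by omega) hw hab hne hjm.le hym.le]
  simp only [← (hG _ _).coe_dist_eq_edist, ← Nat.cast_mul, ← Nat.cast_add,
    ← (Nat.mono_cast (α := ℕ∞)).map_min, ENat.toNat_natCast]
end
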